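/- Let π₁₀(φ) = √((φ²ψ'(φ)² − ψ'(φ) − 1)/(φ²ψ'(φ) + φ − 1)). Then π₁₀(φ) ∝ φ^{−1/2} as φ → 0⁺ and π₁₀(φ) ∝ φ^{−3/2} as φ → ∞. Moreover, for the (φ,α,μ)-reference prior π(φ,μ,α) = π₁₀(φ)/(αμ) on (0,∞)³, and for every integer n ≥ 2 with positive data x_1,…,x_n not all equal, the integral ∫_{(0,∞)³} π(φ,μ,α) · L(φ,μ,α) dφ dμ dα is finite (the posterior is proper), while for all natural numbers q, r, j not all zero, the integral ∫_{(0,∞)³} α^q φ^r μ^j π(φ,μ,α) · L(φ,μ,α) dφ dμ dα is infinite (all higher posterior moments are improper). -/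

import Mathlib

/-! # Reference prior for the Stacy model: power laws, propriety, moments

Write `ψ'` for the trigamma function.

**Power laws.** Convexity of `log Γ` gives `ψ x ≤ log x ≤ ψ (x + 1)`, hence
`ψ' x = ∑ 1 / (x + k) ^ 2`. Near `0` the recurrence `ψ' φ = 1 / φ ^ 2 + ψ' (φ + 1)` shows that
`π₁₀ φ ^ 2` has order `1 / φ`. Near `∞` the numerator of `π₁₀ φ ^ 2` has order `φ ^ (-2)`, which
is seen only after two cancellations; telescoping provides explicit rational bounds for `ψ'` that
agree with enough terms of its asymptotic expansion.

**Integrating out `μ`.** The integral in `μ` is a Gamma integral and leaves, up to a constant,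
`π₁₀ φ * α ^ (n - 2) * gammaRatio n φ * meanRatio n x α ^ (-(n φ))` (`marginal`), where
* `gammaRatio n φ = Γ(nφ) / (Γ(φ) ^ n * n ^ (nφ))` has order `φ ^ (n - 1)` at `0` and, by Stirling,
  `φ ^ ((n - 1) / 2)` at `∞` (`exists_gammaRatio_bounds`);
* `meanRatio n x α` is the arithmetic mean of the `x i ^ α` over their geometric mean. As the data
  are not all equal, its logarithm has order `α ^ 2` at `0` and `α` at `∞`
  (`exists_meanRatio_lower`, `exists_meanRatio_upper`).

**Propriety.** Integrating `α` out as well leaves an order of `φ ^ (-1/2)` at `0` and of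
`φ ^ (-3/2)` at `∞`, which is integrable (`exists_lintegral_marginal_le`).

**Moments.** Let the moment be that of `α ^ q * φ ^ r * μ ^ j`. In each case the integral over a
suitable range of the remaining parameters is bounded below by a multiple of `1 / α`, which is not
integrable at `0` nor at `∞`. If `1 ≤ j`, take `μ ≈ exp (1 / α)` with `φ` bounded and `α → 0`. If
`j = 0` and `r < q`, take `φ ≈ 1 / α` with `α → ∞`. If `j = 0` and `q ≤ r`, then `1 ≤ r`, so
`q < 2 r`, and one takes `φ ≈ 1 / α ^ 2` with `α → 0`.
-/

open MeasureTheory Real Filter Topology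

/-- The digamma function `ψ(x) = d/dx log Γ(x)`. -/
noncomputable def digamma (x : ℝ) : ℝ := deriv (fun t => Real.log (Real.Gamma t)) x

/-- The trigamma function `ψ'(x)`, the derivative of the digamma function. -/
noncomputable def trigamma (x : ℝ) : ℝ := deriv digamma x

/-- The Stacy (generalized gamma) likelihood for data `x : Fin n → ℝ` at
parameters `(φ, μ, α)`. -/
noncomputable def stacyLikelihood (n : ℕ) (x : Fin n → ℝ) (φ μ α : ℝ) : ℝ :=
  α ^ n / Real.Gamma φ ^ n * (∏ i, x i ^ (α * φ - 1)) * μ ^ ((n : ℝ) * α * φ) *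
    Real.exp (-(μ ^ α * ∑ i, x i ^ α))

/-- The `(φ,α,μ)`-reference prior factor
`π₁₀(φ) = √((φ²ψ'(φ)² − ψ'(φ) − 1)/(φ²ψ'(φ) + φ − 1))`. -/
noncomputable def piTen (φ : ℝ) : ℝ :=
  Real.sqrt ((φ ^ 2 * trigamma φ ^ 2 - trigamma φ - 1) / (φ ^ 2 * trigamma φ + φ - 1))

/-! ### The trigamma series and its rational bounds -/

lemma hasDerivAt_log_Gamma {x : ℝ} (hx : 0 < x) :
    HasDerivAt (fun t => Real.log (Real.Gamma t)) (digamma x) x := by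
  have h1 : DifferentiableAt ℝ Real.Gamma x :=
    Real.differentiableAt_Gamma fun m => by
      have : (0 : ℝ) ≤ m := m.cast_nonneg
      linarith
  exact (h1.log (Real.Gamma_pos_of_pos hx).ne').hasDerivAt

lemma log_Gamma_add_one {x : ℝ} (hx : 0 < x) :
    Real.log (Real.Gamma (x + 1)) = Real.log (Real.Gamma x) + Real.log x := by
  rw [Real.Gamma_add_one hx.ne', Real.log_mul hx.ne' (Real.Gamma_pos_of_pos hx).ne', add_comm]

lemma digamma_add_one {x : ℝ} (hx : 0 < x) : digamma (x + 1) = digamma x + 1 / x := by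
  have h1 : HasDerivAt (fun t => Real.log (Real.Gamma (t + 1))) (digamma (x + 1)) x :=
    (hasDerivAt_log_Gamma (by linarith : 0 < x + 1)).comp_add_const x 1
  have h2 : HasDerivAt (fun t => Real.log (Real.Gamma t) + Real.log t) (digamma x + x⁻¹) x :=
    (hasDerivAt_log_Gamma hx).add (Real.hasDerivAt_log hx.ne')
  have h3 : (fun t => Real.log (Real.Gamma (t + 1))) =ᶠ[𝓝 x]
      fun t => Real.log (Real.Gamma t) + Real.log t := by
    filter_upwards [lt_mem_nhds hx] with t ht using log_Gamma_add_one ht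
  rw [one_div]
  exact h1.unique (h2.congr_of_eventuallyEq h3)

/-- The tangent slope of the convex function `log Γ` at `x` is at most the chord slope over
`[x, x + 1]`. -/
lemma digamma_le_log {x : ℝ} (hx : 0 < x) : digamma x ≤ Real.log x := by
  have h := Real.convexOn_log_Gamma.le_slope_of_hasDerivAt (x := x) (y := x + 1)
    (Set.mem_Ioi.2 hx) (Set.mem_Ioi.2 (by linarith)) (by linarith) (hasDerivAt_log_Gamma hx)
  rw [slope_def_field] at h
  simp only [Function.comp, log_Gamma_add_one hx] at h
  simpa using h

lemma log_le_digamma_add_one {x : ℝ} (hx : 0 < x) : Real.log x ≤ digamma (x + 1) := by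
  have h := Real.convexOn_log_Gamma.slope_le_of_hasDerivAt (x := x) (y := x + 1)
    (Set.mem_Ioi.2 hx) (Set.mem_Ioi.2 (by linarith)) (by linarith)
    (hasDerivAt_log_Gamma (by linarith : 0 < x + 1))
  rw [slope_def_field] at h
  simp only [Function.comp, log_Gamma_add_one hx] at h
  simpa using h

lemma digamma_sub_eq_sum {x : ℝ} (hx : 0 < x) (N : ℕ) :
    digamma x - digamma 1 = ∑ k ∈ Finset.range N, (1 / (1 + (k : ℝ)) - 1 / (x + k)) +
      (digamma (x + N) - digamma (1 + N)) := by
  induction N with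
  | zero => simp
  | succ N ih =>
    have h0 : (0 : ℝ) ≤ N := N.cast_nonneg
    rw [Finset.sum_range_succ, ih]
    push_cast
    rw [← add_assoc, ← add_assoc, digamma_add_one (by linarith : 0 < x + N),
      digamma_add_one (by linarith : (0 : ℝ) < 1 + N)]
    ring

lemma tendsto_digamma_sub_log {x : ℝ} (hx : 0 < x) :
    Tendsto (fun N : ℕ => digamma (x + N) - Real.log (N : ℝ)) atTop (𝓝 0) := by
  have hinv : Tendsto (fun N : ℕ => 1 / (x + (N : ℝ))) atTop (𝓝 0) := by
    simp only [one_div]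
    exact (tendsto_atTop_add_const_left _ x tendsto_natCast_atTop_atTop).inv_tendsto_atTop
  have hlog : Tendsto (fun N : ℕ => Real.log (x + N) - Real.log (N : ℝ)) atTop (𝓝 0) := by
    have h1 : Tendsto (fun N : ℕ => Real.log (1 + x / (N : ℝ))) atTop (𝓝 0) := by
      have h2 : Tendsto (fun N : ℕ => 1 + x / (N : ℝ)) atTop (𝓝 (1 + 0)) :=
        tendsto_const_nhds.add (tendsto_const_div_atTop_nhds_zero_nat x)
      rw [add_zero] at h2
      simpa using h2.log one_ne_zero
    refine h1.congr' ?_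
    filter_upwards [eventually_gt_atTop 0] with N hN
    have h0 : (0 : ℝ) < N := by exact_mod_cast hN
    rw [← Real.log_div (by linarith) h0.ne']
    congr 1
    field_simp
    ring
  have hlow : Tendsto (fun N : ℕ => Real.log (x + N) - Real.log (N : ℝ) - 1 / (x + N))
      atTop (𝓝 0) := by simpa using hlog.sub hinv
  refine tendsto_of_tendsto_of_tendsto_of_le_of_le hlow hlog (fun N => ?_) (fun N => ?_)
  all_goals
    have h0 : (0 : ℝ) ≤ N := N.cast_nonneg
    have hp : 0 < x + N := by linarith
  · have h1 := log_le_digamma_add_one hp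
    rw [digamma_add_one hp] at h1
    simp only
    linarith
  · have h1 := digamma_le_log hp
    simp only
    linarith

lemma hasSum_trigamma {x : ℝ} (hx : 0 < x) :
    HasSum (fun k : ℕ => 1 / (x + (k : ℝ)) ^ 2) (trigamma x) := by
  -- work on a half-line bounded away from `0` that contains both `x` and the base point `1`
  obtain ⟨a, ha0, hax, ha1⟩ : ∃ a : ℝ, 0 < a ∧ a < x ∧ a < 1 :=
    ⟨min x 1 / 2, by positivity, by
      have := min_le_left x 1
      linarith, by
      have := min_le_right x 1
      linarith⟩
  have hu : Summable (fun k : ℕ => 1 / (a + (k : ℝ)) ^ 2) := by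
    have h := (Real.summable_one_div_nat_add_rpow a 2).2 (by norm_num)
    refine h.congr fun k => ?_
    have h0 : (0 : ℝ) ≤ k := k.cast_nonneg
    rw [abs_of_pos (by linarith)]
    norm_cast
    rw [add_comm]
  have hder : ∀ (k : ℕ) (y : ℝ), y ∈ Set.Ioi a →
      HasDerivAt (fun y : ℝ => 1 / (1 + (k : ℝ)) - 1 / (y + k)) (1 / (y + (k : ℝ)) ^ 2) y := by
    intro k y hy
    have h0 : (0 : ℝ) ≤ k := k.cast_nonneg
    have hy' : a < y := hy
    have h1 : HasDerivAt (fun y : ℝ => y + (k : ℝ)) 1 y := (hasDerivAt_id y).add_const _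
    have h2 := (h1.fun_inv (by linarith)).const_sub (1 / (1 + (k : ℝ)))
    simp only [one_div] at h2 ⊢
    refine h2.congr_deriv ?_
    rw [neg_div, neg_neg, one_div]
  have hbd : ∀ (k : ℕ) (y : ℝ), y ∈ Set.Ioi a →
      ‖1 / (y + (k : ℝ)) ^ 2‖ ≤ 1 / (a + (k : ℝ)) ^ 2 := by
    intro k y hy
    have h0 : (0 : ℝ) ≤ k := k.cast_nonneg
    have hy' : a < y := hy
    rw [Real.norm_of_nonneg (by positivity)]
    gcongr
  have hs1 : Summable fun k : ℕ => (1 / (1 + (k : ℝ)) - 1 / ((1 : ℝ) + k)) := by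
    simp
  have hsum : ∀ y ∈ Set.Ioi a, digamma y =
      digamma 1 + ∑' k : ℕ, (1 / (1 + (k : ℝ)) - 1 / (y + k)) := by
    intro y hy
    have hy0 : 0 < y := ha0.trans hy
    have hS := summable_of_summable_hasDerivAt_of_isPreconnected hu isOpen_Ioi isPreconnected_Ioi
      hder hbd (Set.mem_Ioi.2 ha1) hs1 hy
    have h1 := hS.hasSum.tendsto_sum_nat
    have h2 : Tendsto (fun N : ℕ => ∑ k ∈ Finset.range N, (1 / (1 + (k : ℝ)) - 1 / (y + k)))
        atTop (𝓝 (digamma y - digamma 1)) := by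
      have h3 := (tendsto_digamma_sub_log hy0).sub (tendsto_digamma_sub_log one_pos)
      have h4 := (tendsto_const_nhds (x := digamma y - digamma 1)).sub h3
      simp only [sub_zero] at h4
      refine h4.congr fun N => ?_
      rw [digamma_sub_eq_sum hy0 N]
      ring
    have := tendsto_nhds_unique h1 h2
    linarith
  have hd := hasDerivAt_tsum_of_isPreconnected hu isOpen_Ioi isPreconnected_Ioi
      hder hbd (Set.mem_Ioi.2 ha1) hs1 (Set.mem_Ioi.2 hax)
  have hd2 : HasDerivAt digamma (∑' k : ℕ, 1 / (x + (k : ℝ)) ^ 2) x := by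
    refine (hd.const_add (digamma 1)).congr_of_eventuallyEq ?_
    filter_upwards [lt_mem_nhds hax] with y hy using hsum y hy
  have hS : Summable fun k : ℕ => 1 / (x + (k : ℝ)) ^ 2 :=
    Summable.of_norm_bounded hu fun k => hbd k x hax
  rw [trigamma, hd2.deriv]
  exact hS.hasSum

lemma trigamma_pos {x : ℝ} (hx : 0 < x) : 0 < trigamma x := by
  have h := sum_le_hasSum {0} (fun k _ => by positivity) (hasSum_trigamma hx)
  simp only [Finset.sum_singleton, Nat.cast_zero, add_zero] at h
  have : 0 < 1 / x ^ 2 := by positivity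
  linarith

lemma trigamma_eq_add {x : ℝ} (hx : 0 < x) : trigamma x = 1 / x ^ 2 + trigamma (x + 1) := by
  have h1 := hasSum_trigamma hx
  have h2 := hasSum_trigamma (by linarith : 0 < x + 1)
  have h3 : HasSum (fun k : ℕ => 1 / (x + ((k + 1 : ℕ) : ℝ)) ^ 2) (trigamma (x + 1)) := by
    convert h2 using 3 with k
    push_cast
    ring
  have h4 := (hasSum_nat_add_iff' (f := fun k : ℕ => 1 / (x + (k : ℝ)) ^ 2) 1).2 h1
  have := h3.unique h4
  simp at this
  rw [this]
  simp

/-- If the backward difference of a function vanishing at infinity dominates `1 / y ^ 2`, then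
telescoping shows that the function dominates `trigamma`. -/
lemma trigamma_le_of_telescope {g : ℝ → ℝ} (hg : Tendsto g atTop (𝓝 0))
    (h : ∀ y > 0, 1 / y ^ 2 ≤ g y - g (y + 1)) {x : ℝ} (hx : 0 < x) : trigamma x ≤ g x := by
  have h1 : ∀ N : ℕ, ∑ k ∈ Finset.range N, 1 / (x + (k : ℝ)) ^ 2 ≤ g x - g (x + N) := by
    intro N
    induction N with
    | zero => simp
    | succ N ih =>
      have h0 : (0 : ℝ) ≤ N := N.cast_nonneg
      have := h (x + N) (by linarith)
      rw [Finset.sum_range_succ]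
      push_cast
      rw [← add_assoc]
      linarith
  have h2 : Tendsto (fun N : ℕ => g x - g (x + N)) atTop (𝓝 (g x - 0)) :=
    tendsto_const_nhds.sub
      (hg.comp (tendsto_atTop_add_const_left _ x tendsto_natCast_atTop_atTop))
  rw [sub_zero] at h2
  exact le_of_tendsto_of_tendsto' (hasSum_trigamma hx).tendsto_sum_nat h2 h1

lemma le_trigamma_of_telescope {g : ℝ → ℝ} (hg : Tendsto g atTop (𝓝 0))
    (h : ∀ y > 0, g y - g (y + 1) ≤ 1 / y ^ 2) {x : ℝ} (hx : 0 < x) : g x ≤ trigamma x := by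
  have h1 : ∀ N : ℕ, g x - g (x + N) ≤ ∑ k ∈ Finset.range N, 1 / (x + (k : ℝ)) ^ 2 := by
    intro N
    induction N with
    | zero => simp
    | succ N ih =>
      have h0 : (0 : ℝ) ≤ N := N.cast_nonneg
      have := h (x + N) (by linarith)
      rw [Finset.sum_range_succ]
      push_cast
      rw [← add_assoc]
      linarith
  have h2 : Tendsto (fun N : ℕ => g x - g (x + N)) atTop (𝓝 (g x - 0)) :=
    tendsto_const_nhds.sub
      (hg.comp (tendsto_atTop_add_const_left _ x tendsto_natCast_atTop_atTop))
  rw [sub_zero] at h2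
  exact le_of_tendsto_of_tendsto' h2 (hasSum_trigamma hx).tendsto_sum_nat h1

lemma tendsto_const_div_pow_atTop_zero (c : ℝ) {m : ℕ} (hm : m ≠ 0) :
    Tendsto (fun x : ℝ => c / x ^ m) atTop (𝓝 0) :=
  tendsto_const_nhds.div_atTop (tendsto_pow_atTop hm)

/-- The first terms of the asymptotic expansion of `trigamma` bound it from above. -/
lemma trigamma_le {x : ℝ} (hx : 0 < x) :
    trigamma x ≤ 1 / x ^ 1 + (1 / 2) / x ^ 2 + (1 / 6) / x ^ 3 := by
  refine trigamma_le_of_telescope (g := fun x => 1 / x ^ 1 + (1 / 2) / x ^ 2 + (1 / 6) / x ^ 3)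
    ?_ ?_ hx
  · simpa using ((tendsto_const_div_pow_atTop_zero 1 one_ne_zero).add
      (tendsto_const_div_pow_atTop_zero (1 / 2) two_ne_zero)).add
      (tendsto_const_div_pow_atTop_zero (1 / 6) three_ne_zero)
  · intro y hy
    rw [← sub_nonneg]
    have : (1 / y ^ 1 + (1 / 2) / y ^ 2 + (1 / 6) / y ^ 3) -
        (1 / (y + 1) ^ 1 + (1 / 2) / (y + 1) ^ 2 + (1 / 6) / (y + 1) ^ 3) - 1 / y ^ 2 =
        1 / (6 * y ^ 3 * (y + 1) ^ 3) := by
      field_simp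
      ring
    rw [this]
    positivity

lemma le_trigamma {x : ℝ} (hx : 0 < x) :
    1 / x ^ 1 + (1 / 2) / x ^ 2 + (1 / 6) / x ^ 3 - (1 / 30) / x ^ 5 ≤ trigamma x := by
  refine le_trigamma_of_telescope
    (g := fun x => 1 / x ^ 1 + (1 / 2) / x ^ 2 + (1 / 6) / x ^ 3 - (1 / 30) / x ^ 5) ?_ ?_ hx
  · simpa using (((tendsto_const_div_pow_atTop_zero 1 one_ne_zero).add
      (tendsto_const_div_pow_atTop_zero (1 / 2) two_ne_zero)).add
      (tendsto_const_div_pow_atTop_zero (1 / 6) three_ne_zero)).sub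
      (tendsto_const_div_pow_atTop_zero (1 / 30) (by norm_num : (5 : ℕ) ≠ 0))
  · intro y hy
    rw [← sub_nonneg]
    have : 1 / y ^ 2 - ((1 / y ^ 1 + (1 / 2) / y ^ 2 + (1 / 6) / y ^ 3 - (1 / 30) / y ^ 5) -
        (1 / (y + 1) ^ 1 + (1 / 2) / (y + 1) ^ 2 + (1 / 6) / (y + 1) ^ 3
          - (1 / 30) / (y + 1) ^ 5)) =
        (5 * y ^ 2 + 5 * y + 1) / (30 * y ^ 5 * (y + 1) ^ 5) := by
      field_simp
      ring
    rw [this]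
    positivity

/-! ### Power-law bounds for the prior factor -/

lemma sq_rpow_neg_one_half {φ : ℝ} (h : 0 < φ) : (φ ^ (-(1 : ℝ) / 2)) ^ 2 = 1 / φ := by
  rw [← Real.rpow_natCast, ← Real.rpow_mul h.le]
  norm_num
  rw [Real.rpow_neg_one]

lemma sq_rpow_neg_three_half {φ : ℝ} (h : 0 < φ) : (φ ^ (-(3 : ℝ) / 2)) ^ 2 = 1 / φ ^ 3 := by
  rw [← Real.rpow_natCast, ← Real.rpow_mul h.le]
  norm_num

lemma piTen_nonneg (φ : ℝ) : 0 ≤ piTen φ := Real.sqrt_nonneg _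

/-- Near `0` the recurrence `ψ'(φ) = φ⁻² + ψ'(φ + 1)` cancels the singular terms of the
numerator. -/
lemma piTen_eq_small {φ : ℝ} (h : 0 < φ) :
    piTen φ = Real.sqrt ((trigamma (φ + 1) - 1 + φ ^ 2 * trigamma (φ + 1) ^ 2) /
      (φ * (1 + φ * trigamma (φ + 1)))) := by
  rw [piTen, trigamma_eq_add h]
  congr 2
  · field_simp
    ring
  · field_simp
    ring

lemma piTen_le_small {φ : ℝ} (h : 0 < φ) (h1 : φ ≤ 1) :
    piTen φ ≤ 3 * φ ^ (-(1 : ℝ) / 2) := by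
  have hs0 := trigamma_pos (by linarith : 0 < φ + 1)
  have hs2 : trigamma (φ + 1) ≤ 2 := by
    refine (trigamma_le (by linarith : 0 < φ + 1)).trans ?_
    have hp : ∀ m : ℕ, 1 ≤ (φ + 1) ^ m := fun m => one_le_pow₀ (by linarith)
    have e1 : 1 / (φ + 1) ^ 1 ≤ 1 := div_le_one_of_le₀ (hp 1) (by positivity)
    have e2 : (1 / 2) / (φ + 1) ^ 2 ≤ 1 / 2 := div_le_self (by norm_num) (hp 2)
    have e3 : (1 / 6) / (φ + 1) ^ 3 ≤ 1 / 6 := div_le_self (by norm_num) (hp 3)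
    linarith
  rw [piTen_eq_small h]
  set s := trigamma (φ + 1)
  refine Real.sqrt_le_iff.2 ⟨by positivity, ?_⟩
  rw [mul_pow, sq_rpow_neg_one_half h, div_le_iff₀ (by positivity)]
  have e1 : φ ^ 2 * s ^ 2 ≤ 1 * 4 := by
    have a1 : φ ^ 2 ≤ 1 := by nlinarith
    have a2 : s ^ 2 ≤ 4 := by nlinarith
    exact mul_le_mul a1 a2 (by positivity) (by norm_num)
  have e2 : 3 ^ 2 * (1 / φ) * (φ * (1 + φ * s)) = 9 * (1 + φ * s) := by
    field_simp
    norm_num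
  rw [e2]
  have : 0 < φ * s := by positivity
  linarith

lemma le_piTen_small {φ : ℝ} (h : 0 < φ) (h1 : φ ≤ 1 / 4) :
    (1 / 5) * φ ^ (-(1 : ℝ) / 2) ≤ piTen φ := by
  have hx0 : 0 < φ + 1 := by linarith
  have hs1 : 11 / 10 ≤ trigamma (φ + 1) := by
    refine le_trans ?_ (le_trigamma hx0)
    have e1 : 4 / 5 ≤ 1 / (φ + 1) ^ 1 := by
      rw [le_div_iff₀ (by positivity)]
      linarith
    have e2 : 8 / 25 ≤ (1 / 2) / (φ + 1) ^ 2 := by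
      rw [le_div_iff₀ (by positivity)]
      nlinarith
    have e3 : (1 / 30) / (φ + 1) ^ 5 ≤ (1 / 6) / (φ + 1) ^ 3 := by
      gcongr
      · norm_num
      · linarith
      · norm_num
    linarith
  have hs2 : trigamma (φ + 1) ≤ 2 := by
    refine (trigamma_le hx0).trans ?_
    have hp : ∀ m : ℕ, 1 ≤ (φ + 1) ^ m := fun m => one_le_pow₀ (by linarith)
    have e1 : 1 / (φ + 1) ^ 1 ≤ 1 := div_le_one_of_le₀ (hp 1) (by positivity)
    have e2 : (1 / 2) / (φ + 1) ^ 2 ≤ 1 / 2 := div_le_self (by norm_num) (hp 2)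
    have e3 : (1 / 6) / (φ + 1) ^ 3 ≤ 1 / 6 := div_le_self (by norm_num) (hp 3)
    linarith
  rw [piTen_eq_small h]
  set s := trigamma (φ + 1)
  refine Real.le_sqrt_of_sq_le ?_
  rw [mul_pow, sq_rpow_neg_one_half h, le_div_iff₀ (by positivity)]
  have e2 : (1 / 5) ^ 2 * (1 / φ) * (φ * (1 + φ * s)) = (1 + φ * s) / 25 := by
    field_simp
    norm_num
  rw [e2]
  have : φ * s ≤ 1 / 4 * 2 := by gcongr
  have : 0 ≤ φ ^ 2 * s ^ 2 := by positivity
  linarith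

/-- The bounds on `ψ'` place numerator and denominator between multiples of `φ⁻²` and of `φ`. -/
lemma piTen_large_aux {φ : ℝ} (h1 : 1 ≤ φ) :
    (1 / 30) / φ ^ 2 ≤ φ ^ 2 * trigamma φ ^ 2 - trigamma φ - 1 ∧
    φ ^ 2 * trigamma φ ^ 2 - trigamma φ - 1 ≤ 1 / φ ^ 2 ∧
    φ ≤ φ ^ 2 * trigamma φ + φ - 1 ∧ φ ^ 2 * trigamma φ + φ - 1 ≤ 2 * φ := by
  have h0 : 0 < φ := by linarith
  have hl := le_trigamma h0
  have hu := trigamma_le h0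
  set t := trigamma φ
  obtain ⟨y, hy⟩ : ∃ y, y = 1 / φ := ⟨_, rfl⟩
  have hφ : φ = 1 / y := by rw [hy, one_div_one_div]
  have hy0 : 0 < y := by rw [hy]; positivity
  have hy1 : y ≤ 1 := by rw [hy]; exact div_le_one_of_le₀ h1 h0.le
  rw [hφ] at hl hu ⊢
  -- rescale to `w = φ * t`, which is close to `1`
  obtain ⟨w, hw⟩ : ∃ w, t = y * w := ⟨t / y, by field_simp⟩
  have hl' : 1 + y / 2 + y ^ 2 / 6 - y ^ 4 / 30 ≤ w := by
    rw [hw] at hl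
    refine le_of_mul_le_mul_left (le_trans (le_of_eq ?_) hl) hy0
    field_simp
  have hu' : w ≤ 1 + y / 2 + y ^ 2 / 6 := by
    rw [hw] at hu
    refine le_of_mul_le_mul_left (le_trans hu (le_of_eq ?_)) hy0
    field_simp
  have hy4 : y ^ 4 ≤ y ^ 2 := pow_le_pow_of_le_one hy0.le hy1 (by norm_num)
  have hw1 : 1 + y / 2 ≤ w := by nlinarith [sq_nonneg y]
  have e1 : (1 / y) ^ 2 * t ^ 2 - t - 1 = w ^ 2 - y * w - 1 := by
    rw [hw]; field_simp
  have e2 : (1 / y) ^ 2 * t + 1 / y - 1 = (w + 1 - y) / y := by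
    rw [hw]; field_simp
  have e3 : (1 / 30) / (1 / y) ^ 2 = y ^ 2 / 30 := by field_simp
  have e4 : 1 / (1 / y) ^ 2 = y ^ 2 := by field_simp
  rw [e1, e2, e3, e4]
  refine ⟨?_, ?_, ?_, ?_⟩
    -- `w ↦ w ^ 2 - y * w` increases for `w ≥ y / 2`
  · set l := 1 + y / 2 + y ^ 2 / 6 - y ^ 4 / 30 with hldef
    have hl1 : 1 + y / 2 ≤ l := by rw [hldef]; nlinarith [sq_nonneg y]
    have : l ^ 2 - y * l ≤ w ^ 2 - y * w := by nlinarith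
    have h3 : l ^ 2 - y * l - 1 - y ^ 2 / 30 =
        y ^ 2 / 20 - y ^ 4 * (7 / 180) - y ^ 6 / 90 + y ^ 8 / 900 := by
      rw [hldef]; ring
    have hy6 : y ^ 6 ≤ y ^ 4 := pow_le_pow_of_le_one hy0.le hy1 (by norm_num)
    have hy8 : 0 ≤ y ^ 8 := by positivity
    linarith
  · set u := 1 + y / 2 + y ^ 2 / 6 with hudef
    have : w ^ 2 - y * w ≤ u ^ 2 - y * u := by nlinarith
    have h3 : u ^ 2 - y * u - 1 = y ^ 2 / 12 + y ^ 4 / 36 := by rw [hudef]; ring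
    nlinarith [sq_nonneg y]
  · gcongr
    linarith
  · have h4 : y ^ 2 ≤ y := by nlinarith
    rw [mul_one_div]
    gcongr
    linarith

lemma piTen_le_large {φ : ℝ} (h1 : 1 ≤ φ) : piTen φ ≤ φ ^ (-(3 : ℝ) / 2) := by
  obtain ⟨-, hN, hD, -⟩ := piTen_large_aux h1
  have h0 : 0 < φ := by linarith
  refine Real.sqrt_le_iff.2 ⟨by positivity, ?_⟩
  rw [sq_rpow_neg_three_half h0, div_le_iff₀ (by linarith)]
  refine hN.trans ?_
  calc 1 / φ ^ 2 = 1 / φ ^ 3 * φ := by field_simp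
    _ ≤ _ := by gcongr

lemma le_piTen_large {φ : ℝ} (h1 : 1 ≤ φ) : (1 / 8) * φ ^ (-(3 : ℝ) / 2) ≤ piTen φ := by
  obtain ⟨hN, -, hD, hD'⟩ := piTen_large_aux h1
  have h0 : 0 < φ := by linarith
  refine Real.le_sqrt_of_sq_le ?_
  rw [mul_pow, sq_rpow_neg_three_half h0, le_div_iff₀ (by linarith)]
  refine le_trans ?_ hN
  calc (1 / 8) ^ 2 * (1 / φ ^ 3) * (φ ^ 2 * trigamma φ + φ - 1)
      ≤ (1 / 8) ^ 2 * (1 / φ ^ 3) * (2 * φ) := by gcongr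
    _ = (2 / 64) / φ ^ 2 := by field_simp; norm_num
    _ ≤ (1 / 30) / φ ^ 2 := by gcongr ?_ / _; norm_num

lemma limsup_ofReal_lt_top {l : Filter ℝ} {f : ℝ → ℝ} (C : ℝ) (h : ∀ᶠ φ in l, f φ ≤ C) :
    Filter.limsup (fun φ => ENNReal.ofReal (f φ)) l < ⊤ :=
  lt_of_le_of_lt (Filter.limsup_le_of_le (h := h.mono fun _ hφ => ENNReal.ofReal_le_ofReal hφ))
    ENNReal.ofReal_lt_top

lemma div_le_of_mul_le {a b c : ℝ} (hc : 0 < c) (ha : 0 < a) (h : c * a ≤ b) : a / b ≤ 1 / c := by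
  have hb : 0 < b := lt_of_lt_of_le (by positivity) h
  rw [div_le_div_iff₀ hb hc]
  linarith

lemma limsup_small :
    Filter.limsup (fun φ : ℝ => ENNReal.ofReal (piTen φ / φ ^ (-(1:ℝ)/2)))
        (𝓝[>] (0:ℝ)) < ⊤ ∧
      Filter.limsup (fun φ : ℝ => ENNReal.ofReal (φ ^ (-(1:ℝ)/2) / piTen φ))
        (𝓝[>] (0:ℝ)) < ⊤ := by
  have hev : ∀ᶠ φ : ℝ in 𝓝[>] 0, 0 < φ ∧ φ ≤ 1 / 4 := by
    filter_upwards [Ioc_mem_nhdsGT (show (0 : ℝ) < 1 / 4 by norm_num)] with φ hφ using hφ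
  refine ⟨limsup_ofReal_lt_top 3 (hev.mono fun φ hφ => ?_),
    limsup_ofReal_lt_top (1 / (1 / 5)) (hev.mono fun φ hφ => ?_)⟩
  · rw [div_le_iff₀ (Real.rpow_pos_of_pos hφ.1 _)]
    exact piTen_le_small hφ.1 (by linarith [hφ.2])
  · exact div_le_of_mul_le (by norm_num) (Real.rpow_pos_of_pos hφ.1 _) (le_piTen_small hφ.1 hφ.2)

lemma limsup_large :
    Filter.limsup (fun φ : ℝ => ENNReal.ofReal (piTen φ / φ ^ (-(3:ℝ)/2)))
        Filter.atTop < ⊤ ∧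
      Filter.limsup (fun φ : ℝ => ENNReal.ofReal (φ ^ (-(3:ℝ)/2) / piTen φ))
        Filter.atTop < ⊤ := by
  have hev : ∀ᶠ φ : ℝ in atTop, 1 ≤ φ := eventually_ge_atTop 1
  refine ⟨limsup_ofReal_lt_top 1 (hev.mono fun φ hφ => ?_),
    limsup_ofReal_lt_top (1 / (1 / 8)) (hev.mono fun φ hφ => ?_)⟩
  · rw [div_le_iff₀ (Real.rpow_pos_of_pos (by linarith) _), one_mul]
    exact piTen_le_large hφ
  · exact div_le_of_mul_le (by norm_num) (Real.rpow_pos_of_pos (by linarith) _)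
      (le_piTen_large hφ)

lemma measurable_piTen : Measurable piTen := by
  have : Measurable trigamma := measurable_deriv _
  unfold piTen
  fun_prop

/-! ### Stirling bounds for the Gamma function -/

/-- The logarithm of the ratio of `Γ x` to the Stirling main term `x ^ (x - 1 / 2) * exp (-x)`. -/
noncomputable def stirlingErr (x : ℝ) : ℝ :=
  Real.log (Real.Gamma x) - (x - 1 / 2) * Real.log x + x

/-- Both bounds come from the expansion of `log ((1 + y) / (1 - y))` at `y = 1 / (2 x + 1)`. -/
lemma log_one_add_inv_bounds {x : ℝ} (hx : 0 < x) :
    1 ≤ (x + 1 / 2) * Real.log (1 + x⁻¹) ∧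
      (x + 1 / 2) * Real.log (1 + x⁻¹) ≤ 1 + (1 / x - 1 / (x + 1)) := by
  have h := (Real.hasSum_log_one_add_inv hx).mul_left (x + 1 / 2)
  set y := 1 / (2 * x + 1) with hy
  have hy0 : 0 < y := by positivity
  have hy1 : y < 1 := by
    rw [hy, div_lt_one (by linarith)]
    linarith
  have hxy : (x + 1 / 2) * y = 1 / 2 := by
    rw [hy]; field_simp
  have hterm : ∀ k : ℕ, (x + 1 / 2) * ((2 : ℝ) * (1 / (2 * k + 1)) * y ^ (2 * k + 1)) =
      1 / (2 * k + 1) * (y ^ 2) ^ k := by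
    intro k
    rw [pow_succ, pow_mul]
    linear_combination (2 * (1 / (2 * (k : ℝ) + 1)) * (y ^ 2) ^ k) * hxy
  simp only [hterm] at h
  have hy2 : y ^ 2 < 1 := by nlinarith
  constructor
  · have := sum_le_hasSum {0} (fun k _ => by positivity) h
    simpa using this
  · have hg := hasSum_geometric_of_lt_one (by positivity) hy2
    have hle := hasSum_le (fun k => ?_) h hg
    · refine hle.trans ?_
      have e : 1 - y ^ 2 = 4 * x * (x + 1) / (2 * x + 1) ^ 2 := by
        rw [hy]; field_simp; ring
      have e' : (1 - y ^ 2)⁻¹ = 1 + (1 / 4) * (1 / x - 1 / (x + 1)) := by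
        rw [e]; field_simp; ring
      have e'' : 1 / (x + 1) ≤ 1 / x := by gcongr; linarith
      rw [e']
      linarith
    · refine mul_le_of_le_one_left (by positivity) (div_le_one_of_le₀ ?_ (by positivity))
      have : (0 : ℝ) ≤ k := k.cast_nonneg
      linarith

lemma stirlingErr_add_one {x : ℝ} (hx : 0 < x) :
    stirlingErr (x + 1) = stirlingErr x + (1 - (x + 1 / 2) * Real.log (1 + x⁻¹)) := by
  have e : 1 + x⁻¹ = (x + 1) / x := by field_simp
  rw [stirlingErr, stirlingErr, log_Gamma_add_one hx, e, Real.log_div (by linarith) hx.ne']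
  ring

lemma stirlingErr_add_nat {x : ℝ} (hx : 0 < x) (k : ℕ) :
    stirlingErr (x + k) ≤ stirlingErr x ∧
      stirlingErr x - (1 / x - 1 / (x + k)) ≤ stirlingErr (x + k) := by
  induction k with
  | zero => simp
  | succ k ih =>
    have h0 : (0 : ℝ) ≤ k := k.cast_nonneg
    have hb := log_one_add_inv_bounds (by linarith : 0 < x + k)
    push_cast
    rw [← add_assoc, stirlingErr_add_one (by linarith : 0 < x + k)]
    constructor <;> linarith [ih.1, ih.2, hb.1, hb.2]

lemma continuousOn_log_Gamma :
    ContinuousOn (fun x => Real.log (Real.Gamma x)) (Set.Ioi 0) :=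
  fun _ hx => (hasDerivAt_log_Gamma hx).continuousAt.continuousWithinAt

/-- The error changes by a telescoping amount under unit shifts, so its size on `[1, ∞)` is
controlled by its size on the compact interval `[1, 2]`. -/
lemma exists_stirlingErr_bound : ∃ B : ℝ, ∀ x : ℝ, 1 ≤ x → |stirlingErr x| ≤ B := by
  have hc : ContinuousOn stirlingErr (Set.Icc 1 2) := by
    unfold stirlingErr
    have h1 : ContinuousOn (fun x => Real.log (Real.Gamma x)) (Set.Icc 1 2) :=
      continuousOn_log_Gamma.mono fun x hx => lt_of_lt_of_le one_pos hx.1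
    have h2 : ContinuousOn Real.log (Set.Icc 1 2) :=
      Real.continuousOn_log.mono fun x hx => by
        have : (1 : ℝ) ≤ x := hx.1
        simp only [Set.mem_compl_iff, Set.mem_singleton_iff]
        linarith
    fun_prop
  obtain ⟨B, hB⟩ := isCompact_Icc.exists_bound_of_continuousOn hc
  refine ⟨B + 1, fun x hx => ?_⟩
  have hk : 1 ≤ ⌊x⌋₊ := Nat.le_floor (by simpa using hx)
  obtain ⟨k, hk⟩ := Nat.exists_eq_add_of_le hk
  have h1 := Nat.floor_le (by linarith : 0 ≤ x)
  have h2 := Nat.lt_floor_add_one x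
  rw [hk] at h1 h2
  push_cast at h1 h2
  have ht := hB (x - k) ⟨by linarith, by linarith⟩
  have ht1 : 1 ≤ x - k := by linarith
  have hs := stirlingErr_add_nat (by linarith : 0 < x - k) k
  rw [sub_add_cancel] at hs
  have e1 : 1 / (x - k) ≤ 1 := div_le_one_of_le₀ ht1 (by linarith)
  have e2 : 0 < 1 / x := by positivity
  rw [Real.norm_eq_abs, abs_le] at ht
  rw [abs_le]
  constructor <;> linarith [hs.1, hs.2, ht.1, ht.2]

/-- The factor `Γ(nφ) / (Γ(φ) ^ n * n ^ (nφ))` that remains after integrating out `μ`. -/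
noncomputable def gammaRatio (n : ℕ) (φ : ℝ) : ℝ :=
  Real.Gamma (n * φ) / Real.Gamma φ ^ n * (n : ℝ) ^ (-((n : ℝ) * φ))

lemma gammaRatio_pos {n : ℕ} (hn : 0 < n) {φ : ℝ} (h : 0 < φ) : 0 < gammaRatio n φ := by
  have hn' : (0 : ℝ) < n := by exact_mod_cast hn
  have h1 := Real.Gamma_pos_of_pos h
  have h2 := Real.Gamma_pos_of_pos (mul_pos hn' h)
  unfold gammaRatio
  positivity

lemma log_gammaRatio {n : ℕ} (hn : 0 < n) {φ : ℝ} (h : 0 < φ) :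
    Real.log (gammaRatio n φ) = Real.log (Real.Gamma (n * φ)) - n * Real.log (Real.Gamma φ)
      - n * φ * Real.log n := by
  have hn' : (0 : ℝ) < n := by exact_mod_cast hn
  have h1 := Real.Gamma_pos_of_pos h
  have h2 := Real.Gamma_pos_of_pos (mul_pos hn' h)
  rw [gammaRatio, Real.log_mul (by positivity) (by positivity), Real.log_div h2.ne' (by positivity),
    Real.log_pow, Real.log_rpow hn']
  ring

lemma exists_log_gammaRatio_bound {n : ℕ} (hn : 0 < n) : ∃ B : ℝ,
    (∀ φ : ℝ, 0 < φ → φ ≤ 1 → |Real.log (gammaRatio n φ) - (n - 1) * Real.log φ| ≤ B) ∧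
    (∀ φ : ℝ, 1 ≤ φ → |Real.log (gammaRatio n φ) - (n - 1) / 2 * Real.log φ| ≤ B) := by
  have hn' : (1 : ℝ) ≤ n := by exact_mod_cast hn
  -- near `0`, the recurrence `Γ(t + 1) = t Γ(t)` removes the poles
  have hc : ContinuousOn (fun φ : ℝ => Real.log (Real.Gamma (n * φ + 1)) -
      n * Real.log (Real.Gamma (φ + 1)) - n * φ * Real.log n - Real.log n) (Set.Icc 0 1) := by
    have h1 : ContinuousOn (fun φ : ℝ => Real.log (Real.Gamma (n * φ + 1))) (Set.Icc 0 1) :=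
      continuousOn_log_Gamma.comp (f := fun φ : ℝ => n * φ + 1) (by fun_prop) fun φ hφ => by
        have := mul_nonneg (by linarith : (0 : ℝ) ≤ n) hφ.1
        simp only [Set.mem_Ioi]
        linarith
    have h2 : ContinuousOn (fun φ : ℝ => Real.log (Real.Gamma (φ + 1))) (Set.Icc 0 1) :=
      continuousOn_log_Gamma.comp (f := fun φ : ℝ => φ + 1) (by fun_prop) fun φ hφ => by
        have := hφ.1
        simp only [Set.mem_Ioi]
        linarith
    fun_prop
  obtain ⟨B₁, hB₁⟩ := isCompact_Icc.exists_bound_of_continuousOn hc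
  obtain ⟨B₂, hB₂⟩ := exists_stirlingErr_bound
  refine ⟨max B₁ (B₂ + n * B₂ + 1 / 2 * Real.log n), fun φ h0 h1 => ?_, fun φ h1 => ?_⟩
  · refine le_trans (le_of_eq ?_) ((hB₁ φ ⟨h0.le, h1⟩).trans (le_max_left _ _))
    have hnφ : 0 < n * φ := by positivity
    rw [Real.norm_eq_abs, log_gammaRatio hn h0]
    simp only [log_Gamma_add_one h0, log_Gamma_add_one hnφ,
      Real.log_mul (by linarith : (n : ℝ) ≠ 0) h0.ne']
    congr 1
    ring
  · refine le_trans ?_ (le_max_right _ _)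
    have h0 : 0 < φ := by linarith
    have e1 := hB₂ φ h1
    have e2 := hB₂ (n * φ) (by nlinarith)
    have hl : 0 ≤ Real.log n := Real.log_nonneg hn'
    have key : Real.log (gammaRatio n φ) - (n - 1) / 2 * Real.log φ =
        stirlingErr (n * φ) - n * stirlingErr φ - 1 / 2 * Real.log n := by
      rw [log_gammaRatio hn h0, stirlingErr, stirlingErr,
        Real.log_mul (by linarith : (n : ℝ) ≠ 0) h0.ne']
      ring
    rw [key]
    have e3 : |n * stirlingErr φ| ≤ n * B₂ := by
      rw [abs_mul, abs_of_nonneg (by linarith : (0 : ℝ) ≤ n)]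
      gcongr
    rw [abs_le] at *
    constructor <;> linarith [e1.1, e1.2, e2.1, e2.2, e3.1, e3.2]

lemma bounds_of_abs_log_sub {K φ p B : ℝ} (hK : 0 < K) (hφ : 0 < φ)
    (h : |Real.log K - p * Real.log φ| ≤ B) :
    Real.exp (-B) * φ ^ p ≤ K ∧ K ≤ Real.exp B * φ ^ p := by
  rw [abs_le] at h
  rw [Real.rpow_def_of_pos hφ, ← Real.exp_add, ← Real.exp_add]
  constructor
  · rw [← Real.le_log_iff_exp_le hK]
    linarith [h.1]
  · rw [← Real.log_le_iff_le_exp hK]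
    linarith [h.2]

lemma exists_gammaRatio_bounds {n : ℕ} (hn : 0 < n) : ∃ c C : ℝ, 0 < c ∧ 0 < C ∧
    (∀ φ : ℝ, 0 < φ → φ ≤ 1 → c * φ ^ ((n : ℝ) - 1) ≤ gammaRatio n φ ∧
      gammaRatio n φ ≤ C * φ ^ ((n : ℝ) - 1)) ∧
    (∀ φ : ℝ, 1 ≤ φ → c * φ ^ (((n : ℝ) - 1) / 2) ≤ gammaRatio n φ ∧
      gammaRatio n φ ≤ C * φ ^ (((n : ℝ) - 1) / 2)) := by
  obtain ⟨B, h1, h2⟩ := exists_log_gammaRatio_bound hn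
  refine ⟨Real.exp (-B), Real.exp B, Real.exp_pos _, Real.exp_pos _, fun φ h0 hle => ?_,
    fun φ hle => ?_⟩
  · exact bounds_of_abs_log_sub (gammaRatio_pos hn h0) h0 (h1 φ h0 hle)
  · exact bounds_of_abs_log_sub (gammaRatio_pos hn (by linarith)) (by linarith) (h2 φ hle)

lemma continuousOn_Gamma_Ioi : ContinuousOn Real.Gamma (Set.Ioi 0) := fun x hx =>
  (Real.differentiableAt_Gamma fun m => by
    have : (0 : ℝ) ≤ m := m.cast_nonneg
    have : 0 < x := hx
    linarith).continuousAt.continuousWithinAt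

/-! ### Dispersion of the data -/

/-- The mean of the logarithms of the data. -/
noncomputable def logMean (n : ℕ) (x : Fin n → ℝ) : ℝ := (∑ i, Real.log (x i)) / n

/-- The ratio of the arithmetic mean of the `x i ^ α` to their geometric mean. -/
noncomputable def meanRatio (n : ℕ) (x : Fin n → ℝ) (α : ℝ) : ℝ :=
  (∑ i, Real.exp (α * (Real.log (x i) - logMean n x))) / n

section Data

variable {n : ℕ} {x : Fin n → ℝ}

lemma meanRatio_pos (hn : 0 < n) (α : ℝ) : 0 < meanRatio n x α := by
  have hn' : (0 : ℝ) < n := by exact_mod_cast hn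
  have : Nonempty (Fin n) := ⟨⟨0, hn⟩⟩
  unfold meanRatio
  have : 0 < ∑ i, Real.exp (α * (Real.log (x i) - logMean n x)) :=
    Finset.sum_pos (fun _ _ => Real.exp_pos _) Finset.univ_nonempty
  positivity

lemma sum_rpow_eq (hn : 0 < n) (hx : ∀ i, 0 < x i) (α : ℝ) :
    ∑ i, x i ^ α = n * Real.exp (α * logMean n x) * meanRatio n x α := by
  have hn' : (0 : ℝ) < n := by exact_mod_cast hn
  have : n * Real.exp (α * logMean n x) * meanRatio n x α =
      Real.exp (α * logMean n x) * ∑ i, Real.exp (α * (Real.log (x i) - logMean n x)) := by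
    unfold meanRatio
    field_simp
  rw [this, Finset.mul_sum]
  refine Finset.sum_congr rfl fun i _ => ?_
  rw [← Real.exp_add, Real.rpow_def_of_pos (hx i)]
  congr 1
  ring

lemma prod_rpow_eq (hn : 0 < n) (hx : ∀ i, 0 < x i) (s : ℝ) :
    ∏ i, x i ^ (s - 1) = (∏ i, x i)⁻¹ * Real.exp (n * s * logMean n x) := by
  have hn' : (0 : ℝ) < n := by exact_mod_cast hn
  have h1 : ∀ i, x i ^ (s - 1) = (x i)⁻¹ * Real.exp (s * Real.log (x i)) := by
    intro i
    rw [Real.rpow_sub_one (hx i).ne', Real.rpow_def_of_pos (hx i), mul_comm s, div_eq_inv_mul]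
  simp only [h1]
  rw [Finset.prod_mul_distrib, Finset.prod_inv_distrib, ← Real.exp_sum, ← Finset.mul_sum]
  congr 2
  unfold logMean
  field_simp

lemma sum_log_sub_logMean (hn : 0 < n) : ∑ i, (Real.log (x i) - logMean n x) = 0 := by
  have hn' : (0 : ℝ) < n := by exact_mod_cast hn
  rw [Finset.sum_sub_distrib, Finset.sum_const, Finset.card_univ, Fintype.card_fin, logMean,
    nsmul_eq_mul]
  field_simp
  ring

/-- The linear terms of the exponentials cancel because the logarithms are centred, and a positive
centred logarithm contributes a quadratic term. -/
lemma one_add_sq_le_meanRatio (hn : 0 < n) (hx : ∀ i, 0 < x i) (hxne : ∃ i j, x i ≠ x j) :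
    ∃ c : ℝ, 0 < c ∧ ∀ α : ℝ, 0 < α → 1 + c * α ^ 2 ≤ meanRatio n x α := by
  have hn' : (0 : ℝ) < n := by exact_mod_cast hn
  have hsum := sum_log_sub_logMean (x := x) hn
  -- not all centred logarithms vanish, so one of them is positive
  obtain ⟨m, hm⟩ : ∃ m, 0 < Real.log (x m) - logMean n x := by
    by_contra! hcon
    have hz := (Finset.sum_eq_zero_iff_of_nonpos (fun i _ => hcon i)).1 hsum
    obtain ⟨i, j, hij⟩ := hxne
    apply hij
    apply Real.log_injOn_pos (hx i) (hx j)
    linarith [hz i (Finset.mem_univ i), hz j (Finset.mem_univ j)]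
  set z : Fin n → ℝ := fun i => Real.log (x i) - logMean n x with hz
  have hm' : 0 < z m := hm
  refine ⟨z m ^ 2 / 2 / n, by positivity, fun α hα => ?_⟩
  unfold meanRatio
  rw [le_div_iff₀ hn']
  have h1 : ∑ i, (1 + α * z i) + (α * z m) ^ 2 / 2 ≤ ∑ i, Real.exp (α * z i) := by
    rw [← Finset.add_sum_erase _ _ (Finset.mem_univ m),
      ← Finset.add_sum_erase (a := m) _ (fun i => Real.exp (α * z i)) (Finset.mem_univ m)]
    have h2 := Real.quadratic_le_exp_of_nonneg (by positivity : 0 ≤ α * z m)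
    have h3 : ∑ i ∈ Finset.univ.erase m, (1 + α * z i) ≤
        ∑ i ∈ Finset.univ.erase m, Real.exp (α * z i) :=
      Finset.sum_le_sum fun i _ => by linarith [Real.add_one_le_exp (α * z i)]
    linarith
  have h4 : ∑ i, (1 + α * z i) = n := by
    rw [Finset.sum_add_distrib, ← Finset.mul_sum, hsum]
    simp
  rw [h4] at h1
  refine le_trans (le_of_eq ?_) h1
  field_simp

/-- The logarithm of the mean ratio is at least quadratic near `0` and at least linear near `∞`;
the latter follows from the power-mean inequality. -/
lemma exists_meanRatio_lower (hn : 0 < n) (hx : ∀ i, 0 < x i) (hxne : ∃ i j, x i ≠ x j) :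
    ∃ c : ℝ, 0 < c ∧ (∀ α : ℝ, 0 < α → α ≤ 1 → Real.exp (c * α ^ 2) ≤ meanRatio n x α) ∧
      ∀ α : ℝ, 1 ≤ α → Real.exp (c * α) ≤ meanRatio n x α := by
  have hn' : (0 : ℝ) < n := by exact_mod_cast hn
  obtain ⟨c, hc, h⟩ := one_add_sq_le_meanRatio hn hx hxne
  refine ⟨Real.log (1 + c), Real.log_pos (by linarith), fun α h0 h1 => ?_, fun α h1 => ?_⟩
  · rw [← Real.rpow_def_of_pos (by linarith)]
    refine le_trans ?_ (h α h0)
    have := rpow_one_add_le_one_add_mul_self (s := c) (p := α ^ 2) (by linarith)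
      (by positivity) (by nlinarith)
    linarith
  · rw [← Real.rpow_def_of_pos (by linarith)]
    have h2 : (1 + c) ^ α ≤ meanRatio n x 1 ^ α := by
      have := h 1 one_pos
      refine Real.rpow_le_rpow (by linarith) (by linarith) (by linarith)
    refine h2.trans ?_
    have h3 := Real.rpow_arith_mean_le_arith_mean_rpow Finset.univ (fun _ : Fin n => 1 / (n : ℝ))
      (fun i => Real.exp (Real.log (x i) - logMean n x)) (fun _ _ => by positivity)
      (by simp [hn'.ne']) (fun _ _ => (Real.exp_pos _).le) h1
    simp only [← Real.exp_mul, one_div_mul_eq_div, ← Finset.sum_div] at h3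
    unfold meanRatio
    simpa only [one_mul, mul_comm α] using h3

/-- The orders of growth in `exists_meanRatio_lower` are sharp; the linear bound holds for all
`α > 0`. -/
lemma exists_meanRatio_upper (hn : 0 < n) :
    ∃ C ε : ℝ, 0 < C ∧ 0 < ε ∧ ε ≤ 1 ∧
      (∀ α : ℝ, 0 < α → α ≤ ε → meanRatio n x α ≤ Real.exp (C * α ^ 2)) ∧
      ∀ α : ℝ, 0 < α → meanRatio n x α ≤ Real.exp (C * α) := by
  have hn' : (0 : ℝ) < n := by exact_mod_cast hn
  have hsum := sum_log_sub_logMean (x := x) hn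
  set z : Fin n → ℝ := fun i => Real.log (x i) - logMean n x with hz
  set Z := 1 + ∑ i, |z i| with hZ
  have hZ1 : 1 ≤ Z := by
    have : 0 ≤ ∑ i, |z i| := Finset.sum_nonneg fun _ _ => abs_nonneg _
    linarith
  have hzZ : ∀ i, |z i| ≤ Z := fun i => by
    have := Finset.single_le_sum (f := fun i => |z i|) (fun _ _ => abs_nonneg _)
      (Finset.mem_univ i)
    linarith
  refine ⟨Z ^ 2, 1 / Z, by positivity, by positivity, div_le_one_of_le₀ hZ1 (by linarith),
    fun α h0 h1 => ?_, fun α h0 => ?_⟩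
  · refine le_trans ?_ (Real.add_one_le_exp _)
    unfold meanRatio
    rw [div_le_iff₀ hn']
    have h2 : ∀ i, Real.exp (α * z i) ≤ 1 + α * z i + Z ^ 2 * α ^ 2 := by
      intro i
      have ha : |α * z i| ≤ α * Z := by
        rw [abs_mul, abs_of_pos h0]
        exact mul_le_mul_of_nonneg_left (hzZ i) h0.le
      have hb : α * Z ≤ 1 := by rwa [le_div_iff₀ (by linarith)] at h1
      have h3 := (abs_le.1 (Real.abs_exp_sub_one_sub_id_le (ha.trans hb))).2
      have h4 : (α * z i) ^ 2 ≤ (α * Z) ^ 2 := sq_le_sq' (by linarith [(abs_le.1 ha).1])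
        (abs_le.1 ha).2
      nlinarith
    refine (Finset.sum_le_sum fun i _ => h2 i).trans (le_of_eq ?_)
    rw [Finset.sum_add_distrib, Finset.sum_add_distrib, ← Finset.mul_sum, hsum]
    simp
    ring
  · unfold meanRatio
    rw [div_le_iff₀ hn']
    have h2 : ∀ i, Real.exp (α * z i) ≤ Real.exp (Z ^ 2 * α) := by
      intro i
      have h3 : z i ≤ Z ^ 2 := (le_abs_self _).trans ((hzZ i).trans (by nlinarith))
      rw [mul_comm]
      gcongr
    refine (Finset.sum_le_sum fun i _ => h2 i).trans (le_of_eq ?_)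
    simp
    ring

/-! ### Integrating out the scale parameter -/

/-- The posterior density of `(φ, α)` after integrating out `μ`. -/
noncomputable def marginal (n : ℕ) (x : Fin n → ℝ) (φ α : ℝ) : ℝ :=
  piTen φ * α ^ (n - 2) * (∏ i, x i)⁻¹ * gammaRatio n φ * meanRatio n x α ^ (-((n : ℝ) * φ))

lemma lintegral_scale (hn : 2 ≤ n) (hx : ∀ i, 0 < x i) {φ α h : ℝ} (hφ : 0 < φ) (hα : 0 < α)
    (hh : 0 ≤ h) :
    ∫⁻ μ in Set.Ioi (0 : ℝ), ENNReal.ofReal (h * (piTen φ / (α * μ) * stacyLikelihood n x φ μ α)) =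
      ENNReal.ofReal (h * marginal n x φ α) := by
  have hn0 : 0 < n := by omega
  have hn' : (0 : ℝ) < n := by exact_mod_cast hn0
  have hΓ := Real.Gamma_pos_of_pos hφ
  have hP : 0 < ∏ i, x i := Finset.prod_pos fun i _ => hx i
  have hE := meanRatio_pos (x := x) hn0 α
  have hpi := piTen_nonneg φ
  have hS := sum_rpow_eq hn0 hx α
  have hq : -1 < (n : ℝ) * α * φ - 1 := by
    have : 0 < (n : ℝ) * α * φ := by positivity
    linarith
  set S := ∑ i, x i ^ α with hSdef
  have hS0 : 0 < S := by rw [hS]; positivity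
  have hint := integral_rpow_mul_exp_neg_mul_rpow hα hq hS0
  have hintble := integrableOn_rpow_mul_exp_neg_mul_rpow hq hα hS0
  have e1 : ((n : ℝ) * α * φ - 1 + 1) / α = n * φ := by field_simp; ring
  have e2 : -((n : ℝ) * α * φ - 1 + 1) / α = -(n * φ) := by rw [neg_div, e1]
  rw [e1, e2] at hint
  set c := h * piTen φ / α * (α ^ n / Real.Gamma φ ^ n * ∏ i, x i ^ (α * φ - 1)) with hc
  have hprod : 0 ≤ ∏ i, x i ^ (α * φ - 1) :=
    Finset.prod_nonneg fun i _ => (Real.rpow_pos_of_pos (hx i) _).le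
  have hc0 : 0 ≤ c := by positivity
  have hcongr : ∀ μ ∈ Set.Ioi (0 : ℝ),
      ENNReal.ofReal (h * (piTen φ / (α * μ) * stacyLikelihood n x φ μ α)) =
      ENNReal.ofReal (c * (μ ^ ((n : ℝ) * α * φ - 1) * Real.exp (-S * μ ^ α))) := by
    intro μ hμ
    have hμ' : 0 < μ := hμ
    congr 1
    rw [stacyLikelihood, Real.rpow_sub_one hμ'.ne', ← hSdef, hc,
      show -(μ ^ α * S) = -S * μ ^ α by ring]
    field_simp
  rw [setLIntegral_congr_fun measurableSet_Ioi hcongr,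
    ← ofReal_integral_eq_lintegral_ofReal (hintble.const_mul c), integral_const_mul, hint]
  · congr 1
    rw [hc, marginal, gammaRatio, prod_rpow_eq hn0 hx, hS, Real.mul_rpow (by positivity) hE.le,
      Real.mul_rpow (by positivity) (by positivity), ← Real.exp_mul]
    obtain ⟨k, rfl⟩ := Nat.exists_eq_add_of_le hn
    have e3 : Real.exp (α * logMean (2 + k) x * -(((2 + k : ℕ) : ℝ) * φ)) =
        (Real.exp (((2 + k : ℕ) : ℝ) * (α * φ) * logMean (2 + k) x))⁻¹ := by
      rw [← Real.exp_neg]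
      congr 1
      ring
    rw [e3, Nat.add_sub_cancel_left, pow_add α 2 k]
    have := Real.exp_pos (((2 + k : ℕ) : ℝ) * (α * φ) * logMean (2 + k) x)
    generalize Real.exp (((2 + k : ℕ) : ℝ) * (α * φ) * logMean (2 + k) x) = X at *
    field_simp
  · filter_upwards [ae_restrict_mem measurableSet_Ioi] with μ hμ
    have hμ' : 0 < μ := hμ
    positivity

/-- Tonelli's theorem together with the Gamma integral in `μ`. -/
lemma lintegral_scale_swap (hn : 2 ≤ n) (hx : ∀ i, 0 < x i) {α : ℝ} (hα : 0 < α) {h : ℝ → ℝ}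
    (hm : Measurable h) (hh : ∀ φ, 0 < φ → 0 ≤ h φ) :
    ∫⁻ μ in Set.Ioi (0 : ℝ), ∫⁻ φ in Set.Ioi (0 : ℝ),
      ENNReal.ofReal (h φ * (piTen φ / (α * μ) * stacyLikelihood n x φ μ α)) =
    ∫⁻ φ in Set.Ioi (0 : ℝ), ENNReal.ofReal (h φ * marginal n x φ α) := by
  rw [lintegral_lintegral_swap]
  · exact setLIntegral_congr_fun measurableSet_Ioi fun φ hφ => lintegral_scale hn hx hφ hα (hh φ hφ)
  · have hΓ : AEMeasurable (fun p : ℝ × ℝ => Real.Gamma p.2)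
        ((volume.restrict (Set.Ioi 0)).prod (volume.restrict (Set.Ioi 0))) :=
      (continuousOn_Gamma_Ioi.aemeasurable measurableSet_Ioi).comp_quasiMeasurePreserving
        Measure.quasiMeasurePreserving_snd
    have hpi := measurable_piTen
    have hprod : Measurable fun p : ℝ × ℝ => ∏ i, x i ^ (α * p.2 - 1) :=
      Finset.measurable_prod _ fun i _ => by fun_prop
    unfold stacyLikelihood
    simp only [Function.uncurry_def]
    refine AEMeasurable.ennreal_ofReal ?_
    refine AEMeasurable.mul (by fun_prop) (AEMeasurable.mul (by fun_prop) ?_)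
    refine AEMeasurable.mul (AEMeasurable.mul (AEMeasurable.mul ?_ hprod.aemeasurable) ?_) ?_
    · exact (hΓ.pow_const n).const_div _
    · exact (Measurable.pow measurable_fst (by fun_prop)).aemeasurable
    · fun_prop

end Data

/-! ### The posterior is proper -/

lemma lintegral_rpow_mul_exp {p q b : ℝ} (hp : 0 < p) (hq : -1 < q) (hb : 0 < b) :
    ∫⁻ α in Set.Ioi (0 : ℝ), ENNReal.ofReal (α ^ q * Real.exp (-b * α ^ p)) =
      ENNReal.ofReal (b ^ (-(q + 1) / p) * (1 / p) * Real.Gamma ((q + 1) / p)) := by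
  rw [← integral_rpow_mul_exp_neg_mul_rpow hp hq hb,
    ← ofReal_integral_eq_lintegral_ofReal (integrableOn_rpow_mul_exp_neg_mul_rpow hq hp hb)]
  filter_upwards [ae_restrict_mem measurableSet_Ioi] with α hα
  have hα' : 0 < α := hα
  positivity

section Data

variable {n : ℕ} {x : Fin n → ℝ}

/-- The posterior density of `φ` alone is at most of order `φ ^ (-1/2)` at `0` and `φ ^ (-3/2)` at
`∞`, hence integrable. -/
lemma exists_lintegral_marginal_le (hn : 2 ≤ n) (hx : ∀ i, 0 < x i)
    (hxne : ∃ i j, x i ≠ x j) :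
    ∃ M : ℝ, 0 < M ∧
      (∀ φ : ℝ, 0 < φ → φ ≤ 1 → ∫⁻ α in Set.Ioi (0 : ℝ), ENNReal.ofReal (marginal n x φ α) ≤
        ENNReal.ofReal (M * φ ^ (-(1 : ℝ) / 2))) ∧
      (∀ φ : ℝ, 1 ≤ φ → ∫⁻ α in Set.Ioi (0 : ℝ), ENNReal.ofReal (marginal n x φ α) ≤
        ENNReal.ofReal (M * φ ^ (-(3 : ℝ) / 2))) := by
  have hn0 : 0 < n := by omega
  have hn' : (0 : ℝ) < n := by exact_mod_cast hn0
  have hn2 : (2 : ℝ) ≤ n := by exact_mod_cast hn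
  have hP : 0 < ∏ i, x i := Finset.prod_pos fun i _ => hx i
  obtain ⟨c, hc, hm1, hm2⟩ := exists_meanRatio_lower hn0 hx hxne
  obtain ⟨_, C, -, hC, hg1, hg2⟩ := exists_gammaRatio_bounds hn0
  set a := c * n with ha
  have ha0 : 0 < a := by positivity
  set D₁ := a ^ (-((n : ℝ) - 1) / 2) * (1 / 2) * Real.Gamma (((n : ℝ) - 1) / 2) with hD₁
  set D₂ := a ^ (-((n : ℝ) - 1)) * Real.Gamma ((n : ℝ) - 1) with hD₂
  have hD₁0 : 0 < D₁ := by
    have : 0 < Real.Gamma (((n : ℝ) - 1) / 2) := Real.Gamma_pos_of_pos (by linarith)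
    positivity
  have hD₂0 : 0 < D₂ := by
    have : 0 < Real.Gamma ((n : ℝ) - 1) := Real.Gamma_pos_of_pos (by linarith)
    positivity
  have key : ∀ φ : ℝ, 0 < φ → ∫⁻ α in Set.Ioi (0 : ℝ), ENNReal.ofReal (marginal n x φ α) ≤
      ENNReal.ofReal (piTen φ * gammaRatio n φ * (∏ i, x i)⁻¹ *
        (D₁ * φ ^ (-((n : ℝ) - 1) / 2) + D₂ * φ ^ (-((n : ℝ) - 1)))) := by
    intro φ hφ
    have hpi := piTen_nonneg φ
    have hg := gammaRatio_pos hn0 hφ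
    set K := piTen φ * gammaRatio n φ * (∏ i, x i)⁻¹ with hK
    have hK0 : 0 ≤ K := by positivity
    have hle : ∀ α ∈ Set.Ioi (0 : ℝ), ENNReal.ofReal (marginal n x φ α) ≤
        ENNReal.ofReal K *
          (ENNReal.ofReal (α ^ ((n : ℝ) - 2) * Real.exp (-(a * φ) * α ^ (2 : ℝ))) +
          ENNReal.ofReal (α ^ ((n : ℝ) - 2) * Real.exp (-(a * φ) * α ^ (1 : ℝ)))) := by
      intro α hα
      have hα' : 0 < α := hα
      rw [← ENNReal.ofReal_add (by positivity) (by positivity), ← ENNReal.ofReal_mul hK0]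
      apply ENNReal.ofReal_le_ofReal
      have e1 : α ^ (n - 2) = α ^ ((n : ℝ) - 2) := by
        rw [← Real.rpow_natCast, Nat.cast_sub hn, Nat.cast_ofNat]
      have hmar : marginal n x φ α =
          K * (α ^ ((n : ℝ) - 2) * meanRatio n x α ^ (-((n : ℝ) * φ))) := by
        rw [marginal, hK, e1]; ring
      rw [hmar, ← mul_add]
      have hneg : -((n : ℝ) * φ) ≤ 0 := by nlinarith
      have hE : meanRatio n x α ^ (-((n : ℝ) * φ)) ≤
          Real.exp (-(a * φ) * α ^ (2 : ℝ)) + Real.exp (-(a * φ) * α ^ (1 : ℝ)) := by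
        rcases le_total α 1 with h | h
        · have h2 := Real.rpow_le_rpow_of_nonpos (Real.exp_pos _) (hm1 α hα' h) hneg
          rw [← Real.exp_mul] at h2
          have h3 : -(a * φ) * α ^ (2 : ℝ) = c * α ^ 2 * -((n : ℝ) * φ) := by
            rw [Real.rpow_two, ha]; ring
          rw [h3]
          linarith [Real.exp_pos (-(a * φ) * α ^ (1 : ℝ))]
        · have h2 := Real.rpow_le_rpow_of_nonpos (Real.exp_pos _) (hm2 α h) hneg
          rw [← Real.exp_mul] at h2
          have h3 : -(a * φ) * α ^ (1 : ℝ) = c * α * -((n : ℝ) * φ) := by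
            rw [Real.rpow_one, ha]; ring
          rw [h3]
          linarith [Real.exp_pos (-(a * φ) * α ^ (2 : ℝ))]
      gcongr
    refine (setLIntegral_mono' measurableSet_Ioi hle).trans (le_of_eq ?_)
    rw [lintegral_const_mul _ (by fun_prop), lintegral_add_left (by fun_prop),
      lintegral_rpow_mul_exp two_pos (by linarith) (by positivity),
      lintegral_rpow_mul_exp one_pos (by linarith) (by positivity)]
    have e2 : (n : ℝ) - 2 + 1 = n - 1 := by ring
    have hG1 : 0 < Real.Gamma (((n : ℝ) - 1) / 2) := Real.Gamma_pos_of_pos (by linarith)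
    have hG2 : 0 < Real.Gamma ((n : ℝ) - 1) := Real.Gamma_pos_of_pos (by linarith)
    simp only [e2, div_one, mul_one]
    rw [← ENNReal.ofReal_add (by positivity) (by positivity),
      ← ENNReal.ofReal_mul hK0, Real.mul_rpow ha0.le hφ.le, Real.mul_rpow ha0.le hφ.le]
    congr 2
    rw [hD₁, hD₂]
    ring
  have hM : 0 < 3 * C * (∏ i, x i)⁻¹ * (D₁ + D₂) := by positivity
  refine ⟨3 * C * (∏ i, x i)⁻¹ * (D₁ + D₂), hM, fun φ h0 h1 => ?_, fun φ h1 => ?_⟩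
  · refine (key φ h0).trans (ENNReal.ofReal_le_ofReal ?_)
    have hpi := piTen_nonneg φ
    have hg := gammaRatio_pos hn0 h0
    have h2 : φ ^ (-((n : ℝ) - 1) / 2) ≤ φ ^ (-((n : ℝ) - 1)) :=
      Real.rpow_le_rpow_of_exponent_ge h0 h1 (by linarith)
    calc _ ≤ (3 * φ ^ (-(1 : ℝ) / 2)) * (C * φ ^ ((n : ℝ) - 1)) * (∏ i, x i)⁻¹ *
          (D₁ * φ ^ (-((n : ℝ) - 1)) + D₂ * φ ^ (-((n : ℝ) - 1))) := by
          gcongr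
          · exact piTen_le_small h0 h1
          · exact (hg1 φ h0 h1).2
      _ = 3 * C * (∏ i, x i)⁻¹ * (D₁ + D₂) * φ ^ (-(1 : ℝ) / 2) *
          (φ ^ ((n : ℝ) - 1) * φ ^ (-((n : ℝ) - 1))) := by ring
      _ = _ := by rw [← Real.rpow_add h0, add_neg_cancel, Real.rpow_zero, mul_one]
  · have h0 : 0 < φ := by linarith
    refine (key φ h0).trans (ENNReal.ofReal_le_ofReal ?_)
    have hpi := piTen_nonneg φ
    have hg := gammaRatio_pos hn0 h0
    have h2 : φ ^ (-((n : ℝ) - 1)) ≤ φ ^ (-((n : ℝ) - 1) / 2) :=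
      Real.rpow_le_rpow_of_exponent_le h1 (by linarith)
    calc _ ≤ (3 * φ ^ (-(3 : ℝ) / 2)) * (C * φ ^ (((n : ℝ) - 1) / 2)) * (∏ i, x i)⁻¹ *
          (D₁ * φ ^ (-((n : ℝ) - 1) / 2) + D₂ * φ ^ (-((n : ℝ) - 1) / 2)) := by
          gcongr
          · have := Real.rpow_pos_of_pos h0 (-(3 : ℝ) / 2)
            linarith [piTen_le_large h1]
          · exact (hg2 φ h1).2
      _ = 3 * C * (∏ i, x i)⁻¹ * (D₁ + D₂) * φ ^ (-(3 : ℝ) / 2) *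
          (φ ^ (((n : ℝ) - 1) / 2) * φ ^ (-((n : ℝ) - 1) / 2)) := by ring
      _ = _ := by
          have e3 : ((n : ℝ) - 1) / 2 + -((n : ℝ) - 1) / 2 = 0 := by ring
          rw [← Real.rpow_add h0, e3, Real.rpow_zero, mul_one]

lemma lintegral_posterior_lt_top (hn : 2 ≤ n) (hx : ∀ i, 0 < x i)
    (hxne : ∃ i j, x i ≠ x j) :
    ∫⁻ α in Set.Ioi (0 : ℝ), ∫⁻ μ in Set.Ioi (0 : ℝ), ∫⁻ φ in Set.Ioi (0 : ℝ),
      ENNReal.ofReal (piTen φ / (α * μ) * stacyLikelihood n x φ μ α) < ⊤ := by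
  have hn0 : 0 < n := by omega
  have h1 : ∀ α ∈ Set.Ioi (0 : ℝ), ∫⁻ μ in Set.Ioi (0 : ℝ), ∫⁻ φ in Set.Ioi (0 : ℝ),
      ENNReal.ofReal (piTen φ / (α * μ) * stacyLikelihood n x φ μ α) =
      ∫⁻ φ in Set.Ioi (0 : ℝ), ENNReal.ofReal (marginal n x φ α) := by
    intro α hα
    have := lintegral_scale_swap hn hx hα (h := fun _ => 1) measurable_const
      (fun _ _ => zero_le_one)
    simpa only [one_mul] using this
  rw [setLIntegral_congr_fun measurableSet_Ioi h1, lintegral_lintegral_swap]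
  · obtain ⟨M, hM, hs, hl⟩ := exists_lintegral_marginal_le hn hx hxne
    rw [← Set.Ioc_union_Ioi_eq_Ioi zero_le_one]
    refine (lintegral_union_le _ _ _).trans_lt (ENNReal.add_lt_top.2 ⟨?_, ?_⟩)
    · refine (setLIntegral_mono' measurableSet_Ioc fun φ hφ => ?_).trans_lt
        (IntegrableOn.setLIntegral_lt_top (f := fun φ : ℝ => M * φ ^ (-(1 : ℝ) / 2)) ?_)
      · rw [Set.Ioc_union_Ioi_eq_Ioi zero_le_one]
        exact hs φ hφ.1 hφ.2
      · apply Integrable.const_mul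
        rw [← IntegrableOn, ← intervalIntegrable_iff_integrableOn_Ioc_of_le zero_le_one]
        exact intervalIntegral.intervalIntegrable_rpow' (by norm_num)
    · refine (setLIntegral_mono' measurableSet_Ioi fun φ hφ => ?_).trans_lt
        (IntegrableOn.setLIntegral_lt_top (f := fun φ : ℝ => M * φ ^ (-(3 : ℝ) / 2)) ?_)
      · rw [Set.Ioc_union_Ioi_eq_Ioi zero_le_one]
        exact hl φ (le_of_lt hφ)
      · exact Integrable.const_mul (integrableOn_Ioi_rpow_of_lt (by norm_num) one_pos) M
  · have hΓ : AEMeasurable (fun p : ℝ × ℝ => Real.Gamma p.2)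
        ((volume.restrict (Set.Ioi 0)).prod (volume.restrict (Set.Ioi 0))) :=
      (continuousOn_Gamma_Ioi.aemeasurable measurableSet_Ioi).comp_quasiMeasurePreserving
        Measure.quasiMeasurePreserving_snd
    have hΓn : AEMeasurable (fun p : ℝ × ℝ => Real.Gamma (n * p.2))
        ((volume.restrict (Set.Ioi 0)).prod (volume.restrict (Set.Ioi 0))) := by
      have hc : ContinuousOn (fun φ : ℝ => Real.Gamma (n * φ)) (Set.Ioi 0) :=
        continuousOn_Gamma_Ioi.comp (by fun_prop) fun φ hφ =>
          Set.mem_Ioi.2 (mul_pos (Nat.cast_pos.2 hn0) hφ)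
      exact (hc.aemeasurable measurableSet_Ioi).comp_quasiMeasurePreserving
        Measure.quasiMeasurePreserving_snd
    have hpi := measurable_piTen
    have hmr : Measurable (meanRatio n x) := by
      unfold meanRatio
      fun_prop
    simp only [Function.uncurry_def, marginal, gammaRatio]
    refine AEMeasurable.ennreal_ofReal ?_
    refine AEMeasurable.mul (AEMeasurable.mul (by fun_prop) ?_) ?_
    · refine AEMeasurable.mul (hΓn.div (hΓ.pow_const n)) ?_
      exact (Measurable.pow measurable_const (by fun_prop)).aemeasurable
    · exact (Measurable.pow (hmr.comp measurable_fst) (by fun_prop)).aemeasurable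

end Data

/-! ### Higher posterior moments diverge -/

lemma lintegral_inv_zero {ε c : ℝ} (hε : 0 < ε) (hc : 0 < c) :
    ∫⁻ α in Set.Ioc 0 ε, ENNReal.ofReal (c / α) = ⊤ := by
  by_contra hcon
  have hm : AEStronglyMeasurable (fun α : ℝ => c / α) (volume.restrict (Set.Ioc 0 ε)) := by
    fun_prop
  have hi : IntegrableOn (fun α : ℝ => c / α) (Set.Ioc 0 ε) := by
    rw [IntegrableOn, ← lintegral_ofReal_ne_top_iff_integrable hm]
    · exact hcon
    · filter_upwards [ae_restrict_mem measurableSet_Ioc] with α hα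
      have : 0 < α := hα.1
      positivity
  have h2 : IntervalIntegrable (fun α : ℝ => α⁻¹) volume 0 ε := by
    rw [intervalIntegrable_iff_integrableOn_Ioc_of_le hε.le]
    have := hi.const_mul c⁻¹
    refine this.congr (ae_of_all _ fun α => ?_)
    field_simp
  rw [intervalIntegrable_inv_iff] at h2
  rcases h2 with h | h
  · exact hε.ne h
  · exact h Set.left_mem_uIcc

lemma lintegral_inv_infty {A c : ℝ} (hA : 0 < A) (hc : 0 < c) :
    ∫⁻ α in Set.Ioi A, ENNReal.ofReal (c / α) = ⊤ := by
  by_contra hcon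
  have hm : AEStronglyMeasurable (fun α : ℝ => c / α) (volume.restrict (Set.Ioi A)) := by
    fun_prop
  have hi : IntegrableOn (fun α : ℝ => c / α) (Set.Ioi A) := by
    rw [IntegrableOn, ← lintegral_ofReal_ne_top_iff_integrable hm]
    · exact hcon
    · filter_upwards [ae_restrict_mem measurableSet_Ioi] with α hα
      have : 0 < α := hA.trans hα
      positivity
  refine not_integrableOn_Ioi_inv (a := A) ?_
  have := hi.const_mul c⁻¹
  refine this.congr (ae_of_all _ fun α => ?_)
  field_simp

lemma le_lintegral_Ioi {f : ℝ → ENNReal} {a b v w : ℝ} (ha : 0 < a) (hv : 0 ≤ v)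
    (hw : w ≤ v * (b - a)) (hf : ∀ t, a ≤ t → t ≤ b → ENNReal.ofReal v ≤ f t) :
    ENNReal.ofReal w ≤ ∫⁻ t in Set.Ioi (0 : ℝ), f t := by
  calc ENNReal.ofReal w ≤ ENNReal.ofReal v * ENNReal.ofReal (b - a) := by
        rw [← ENNReal.ofReal_mul hv]
        exact ENNReal.ofReal_le_ofReal hw
    _ = ∫⁻ _ in Set.Icc a b, ENNReal.ofReal v := by
        rw [setLIntegral_const, Real.volume_Icc]
    _ ≤ ∫⁻ t in Set.Icc a b, f t :=
        setLIntegral_mono' measurableSet_Icc fun t ht => hf t ht.1 ht.2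
    _ ≤ _ := lintegral_mono_set fun t ht => ha.trans_le ht.1

section Data

variable {n : ℕ} {x : Fin n → ℝ}

/-- Moments involving `μ` diverge because of the region `μ ≈ exp (1 / α)`, `α → 0`: there
`μ ^ α` stays bounded, while the length of the range of `μ` beats every power of `α`. -/
lemma moment_eq_top_of_scale (hn : 2 ≤ n) (hx : ∀ i, 0 < x i) (q r : ℕ) {j : ℕ} (hj : 1 ≤ j) :
    ∫⁻ α in Set.Ioi (0 : ℝ), ∫⁻ μ in Set.Ioi (0 : ℝ), ∫⁻ φ in Set.Ioi (0 : ℝ),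
      ENNReal.ofReal (α ^ q * φ ^ r * μ ^ j *
        (piTen φ / (α * μ) * stacyLikelihood n x φ μ α)) = ⊤ := by
  have hn0 : 0 < n := by omega
  have hn' : (0 : ℝ) < n := by exact_mod_cast hn0
  have hP : 0 < ∏ i, x i := Finset.prod_pos fun i _ => hx i
  obtain ⟨C, -, hC, -, -, -, hmr⟩ := exists_meanRatio_upper (x := x) hn0
  set L := |logMean n x| with hL
  have hL0 : 0 ≤ L := abs_nonneg _
  set B := (n : ℝ) * Real.exp L * Real.exp C with hB
  have hB0 : 0 < B := by positivity
  obtain ⟨G, hG⟩ := (isCompact_Icc (a := (1 : ℝ)) (b := 2)).bddAbove_image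
    (continuousOn_Gamma_Ioi.mono fun t ht => Set.mem_Ioi.2 (one_pos.trans_le ht.1))
  have hG' : ∀ φ : ℝ, 1 ≤ φ → φ ≤ 2 → Real.Gamma φ ≤ G :=
    fun φ h1 h2 => hG ⟨φ, ⟨h1, h2⟩, rfl⟩
  have hG0 : 0 < G := (Real.Gamma_pos_of_pos one_pos).trans_le (hG' 1 le_rfl one_le_two)
  set c := (1 / 8) * (2 : ℝ) ^ (-(3 : ℝ) / 2) * (1 / G ^ n) *
    ((∏ i, x i)⁻¹ * Real.exp (-(2 * n * L))) * Real.exp (-(2 * Real.exp 1 * B)) with hc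
  have hc0 : 0 < c := by positivity
  have key : ∀ α μ φ : ℝ, 0 < α → α ≤ 1 → Real.exp (1 / α) ≤ μ → μ ≤ 2 * Real.exp (1 / α) →
      1 ≤ φ → φ ≤ 2 → c * (α ^ (q + n) / α) ≤ α ^ q * φ ^ r * μ ^ j *
        (piTen φ / (α * μ) * stacyLikelihood n x φ μ α) := by
    intro α μ φ h0 h1 hμ1 hμ2 hφ1 hφ2
    have hφ0 : 0 < φ := by linarith
    have hμ : 1 ≤ μ := le_trans (Real.one_le_exp (by positivity)) hμ1
    have hμ0 : 0 < μ := by linarith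
    have hpi0 := piTen_nonneg φ
    have hpi : (1 / 8) * (2 : ℝ) ^ (-(3 : ℝ) / 2) ≤ piTen φ := by
      refine le_trans ?_ (le_piTen_large hφ1)
      have := Real.rpow_le_rpow_of_nonpos hφ0 hφ2 (by norm_num : -(3 : ℝ) / 2 ≤ 0)
      linarith
    have hΓ0 := Real.Gamma_pos_of_pos hφ0
    have hΓ : 1 / G ^ n ≤ 1 / Real.Gamma φ ^ n := by
      have := hG' φ hφ1 hφ2
      gcongr
    have hαφ : α * φ ≤ 2 := by nlinarith
    have hαφ0 : 0 < α * φ := by positivity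
    have hprod : (∏ i, x i)⁻¹ * Real.exp (-(2 * n * L)) ≤ ∏ i, x i ^ (α * φ - 1) := by
      rw [prod_rpow_eq hn0 hx]
      gcongr
      have h2 : -L ≤ logMean n x := neg_abs_le _
      have h3 : (n * (α * φ)) * L ≤ (n * 2) * L := by gcongr
      have h4 : (n * (α * φ)) * -L ≤ (n * (α * φ)) * logMean n x := by gcongr
      linarith
    have hS : ∑ i, x i ^ α ≤ B := by
      rw [sum_rpow_eq hn0 hx]
      have h2 : α * logMean n x ≤ L := by
        have h3 : logMean n x ≤ L := le_abs_self _
        nlinarith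
      have h4 : meanRatio n x α ≤ Real.exp C :=
        (hmr α h0).trans (Real.exp_le_exp.2 (by nlinarith))
      have h5 := meanRatio_pos (x := x) hn0 α
      rw [hB]
      gcongr
    have hμα : μ ^ α ≤ 2 * Real.exp 1 := by
      calc μ ^ α ≤ (2 * Real.exp (1 / α)) ^ α := by gcongr
        _ = 2 ^ α * Real.exp 1 := by
          rw [Real.mul_rpow two_pos.le (Real.exp_pos _).le, ← Real.exp_mul]
          congr 2
          field_simp
        _ ≤ 2 ^ (1 : ℝ) * Real.exp 1 := by
          gcongr
          exact one_le_two
        _ = _ := by rw [Real.rpow_one]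
    have hexp : Real.exp (-(2 * Real.exp 1 * B)) ≤ Real.exp (-(μ ^ α * ∑ i, x i ^ α)) := by
      have hS0 : 0 ≤ ∑ i, x i ^ α := Finset.sum_nonneg fun i _ => (Real.rpow_pos_of_pos (hx i) _).le
      gcongr
    have hμn : 1 ≤ μ ^ ((n : ℝ) * α * φ) := Real.one_le_rpow hμ (by positivity)
    have hφr : 1 ≤ φ ^ r := one_le_pow₀ hφ1
    have hμj : 1 ≤ μ ^ j / μ := by
      rw [one_le_div hμ0]
      exact le_self_pow₀ hμ (by omega)
    have hpr0 : 0 ≤ ∏ i, x i ^ (α * φ - 1) :=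
      Finset.prod_nonneg fun i _ => (Real.rpow_pos_of_pos (hx i) _).le
    calc c * (α ^ (q + n) / α)
        = (α ^ (q + n) / α) * 1 * 1 * ((1 / 8) * (2 : ℝ) ^ (-(3 : ℝ) / 2)) * (1 / G ^ n) *
          ((∏ i, x i)⁻¹ * Real.exp (-(2 * n * L))) * 1 * Real.exp (-(2 * Real.exp 1 * B)) := by
          rw [hc]; ring
      _ ≤ (α ^ (q + n) / α) * φ ^ r * (μ ^ j / μ) * piTen φ * (1 / Real.Gamma φ ^ n) *
          (∏ i, x i ^ (α * φ - 1)) * μ ^ ((n : ℝ) * α * φ) *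
            Real.exp (-(μ ^ α * ∑ i, x i ^ α)) := by
          gcongr
      _ = _ := by
          rw [stacyLikelihood, pow_add]
          field_simp
  rw [← top_le_iff, ← lintegral_inv_zero (ε := 1) (c := c / (q + n).factorial) one_pos
    (by positivity)]
  refine (setLIntegral_mono' measurableSet_Ioc fun α hα => ?_).trans
    (lintegral_mono_set fun α hα => hα.1)
  obtain ⟨h0, h1⟩ := hα
  have hv : 0 ≤ c * (α ^ (q + n) / α) := by positivity
  refine le_lintegral_Ioi (a := Real.exp (1 / α)) (b := 2 * Real.exp (1 / α)) (Real.exp_pos _)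
    hv ?_ fun μ hμ1 hμ2 => ?_
  · have h2 := Real.pow_div_factorial_le_exp (x := 1 / α) (by positivity) (q + n)
    have h3 : c / (q + n).factorial / α =
        c * (α ^ (q + n) / α) * ((1 / α) ^ (q + n) / (q + n).factorial) := by
      rw [one_div, inv_pow]
      field_simp
    rw [h3, show 2 * Real.exp (1 / α) - Real.exp (1 / α) = Real.exp (1 / α) by ring]
    gcongr
  · refine le_lintegral_Ioi (a := 1) (b := 2) one_pos hv (by linarith) fun φ hφ1 hφ2 => ?_
    exact ENNReal.ofReal_le_ofReal (key α μ φ h0 h1 hμ1 hμ2 hφ1 hφ2)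

lemma lintegral_shape_moment (hn : 2 ≤ n) (hx : ∀ i, 0 < x i) (q r : ℕ) {α : ℝ} (hα : 0 < α) :
    ∫⁻ μ in Set.Ioi (0 : ℝ), ∫⁻ φ in Set.Ioi (0 : ℝ),
      ENNReal.ofReal (α ^ q * φ ^ r * μ ^ 0 *
        (piTen φ / (α * μ) * stacyLikelihood n x φ μ α)) =
    ∫⁻ φ in Set.Ioi (0 : ℝ), ENNReal.ofReal (α ^ q * φ ^ r * marginal n x φ α) := by
  have := lintegral_scale_swap hn hx hα (h := fun φ => α ^ q * φ ^ r) (by fun_prop)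
    (fun φ hφ => by positivity)
  simpa only [pow_zero, mul_one] using this

/-- If `r < q` the moment diverges because of the region `φ ≈ 1 / α`, `α → ∞`. -/
lemma moment_eq_top_of_lt (hn : 2 ≤ n) (hx : ∀ i, 0 < x i) {q r : ℕ} (hqr : r + 1 ≤ q) :
    ∫⁻ α in Set.Ioi (0 : ℝ), ∫⁻ μ in Set.Ioi (0 : ℝ), ∫⁻ φ in Set.Ioi (0 : ℝ),
      ENNReal.ofReal (α ^ q * φ ^ r * μ ^ 0 *
        (piTen φ / (α * μ) * stacyLikelihood n x φ μ α)) = ⊤ := by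
  have hn0 : 0 < n := by omega
  have hn' : (0 : ℝ) < n := by exact_mod_cast hn0
  have hP : 0 < ∏ i, x i := Finset.prod_pos fun i _ => hx i
  obtain ⟨C, -, hC, -, -, -, hmr⟩ := exists_meanRatio_upper (x := x) hn0
  obtain ⟨c₀, _, hc₀, -, hg, -⟩ := exists_gammaRatio_bounds hn0
  set c := (1 / 5) * c₀ * (∏ i, x i)⁻¹ * Real.exp (-(C * n)) * (1 / 2) ^ (r + n - 1) with hc
  have hc0 : 0 < c := by positivity
  have key : ∀ α φ : ℝ, 4 ≤ α → 1 / (2 * α) ≤ φ → φ ≤ 1 / α →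
      c ≤ α ^ q * φ ^ r * marginal n x φ α := by
    intro α φ hα h1 h2
    have hα0 : 0 < α := by linarith
    have hφ0 : 0 < φ := lt_of_lt_of_le (by positivity) h1
    have ha : 1 / 2 ≤ α * φ := by
      rw [div_le_iff₀ (by positivity)] at h1
      linarith
    have hb : α * φ ≤ 1 := by
      rw [le_div_iff₀ hα0] at h2
      linarith
    have hφ1 : φ ≤ 1 / 4 := by nlinarith
    have hpi0 := piTen_nonneg φ
    have hpi : 1 / 5 ≤ piTen φ := by
      refine le_trans ?_ (le_piTen_small hφ0 hφ1)
      have := Real.one_le_rpow_of_pos_of_le_one_of_nonpos hφ0 (by linarith)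
        (by norm_num : -(1 : ℝ) / 2 ≤ 0)
      linarith
    have hgr : c₀ * φ ^ (n - 1) ≤ gammaRatio n φ := by
      refine le_trans (le_of_eq ?_) (hg φ hφ0 (by linarith)).1
      rw [← Real.rpow_natCast, Nat.cast_sub (by omega), Nat.cast_one]
    have hm : Real.exp (-(C * n)) ≤ meanRatio n x α ^ (-((n : ℝ) * φ)) := by
      refine le_trans ?_ (Real.rpow_le_rpow_of_nonpos (meanRatio_pos hn0 α) (hmr α hα0)
        (by nlinarith))
      rw [← Real.exp_mul]
      gcongr
      have : C * n * (α * φ) ≤ C * n * 1 := by gcongr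
      linarith
    have hq : α ^ (r + 1) ≤ α ^ q := pow_le_pow_right₀ (by linarith) hqr
    have hpos := gammaRatio_pos hn0 hφ0
    obtain ⟨k, rfl⟩ := Nat.exists_eq_add_of_le hn
    have e1 : 2 + k - 2 = k := by omega
    have e2 : 2 + k - 1 = k + 1 := by omega
    have e3 : r + (2 + k) - 1 = r + k + 1 := by omega
    rw [e2] at hgr
    calc c ≤ (1 / 5) * c₀ * (∏ i, x i)⁻¹ * Real.exp (-(C * (2 + k : ℕ))) *
          (α * φ) ^ (r + k + 1) := by
          rw [hc, e3]
          gcongr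
      _ = α ^ (r + 1) * φ ^ r * ((1 / 5) * α ^ k * (∏ i, x i)⁻¹ * (c₀ * φ ^ (k + 1)) *
          Real.exp (-(C * (2 + k : ℕ)))) := by ring
      _ ≤ _ := by
          rw [marginal, e1]
          gcongr
  have h4 : (0 : ℝ) < 4 := by norm_num
  rw [← top_le_iff, ← lintegral_inv_infty (A := 4) (c := c / 2) h4 (by positivity)]
  refine (setLIntegral_mono' measurableSet_Ioi fun α hα => ?_).trans
    (lintegral_mono_set fun α hα => h4.trans hα)
  have hα0 : 0 < α := h4.trans hα
  rw [lintegral_shape_moment hn hx q r hα0]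
  refine le_lintegral_Ioi (a := 1 / (2 * α)) (b := 1 / α) (by positivity) hc0.le
    (le_of_eq ?_) fun φ h1 h2 => ENNReal.ofReal_le_ofReal (key α φ (le_of_lt hα) h1 h2)
  field_simp
  ring

/-- If `q < 2 * r` the moment diverges because of the region `φ ≈ 1 / α ^ 2`, `α → 0`. -/
lemma moment_eq_top_of_lt_two_mul (hn : 2 ≤ n) (hx : ∀ i, 0 < x i) {q r : ℕ}
    (hqr : q + 1 ≤ 2 * r) :
    ∫⁻ α in Set.Ioi (0 : ℝ), ∫⁻ μ in Set.Ioi (0 : ℝ), ∫⁻ φ in Set.Ioi (0 : ℝ),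
      ENNReal.ofReal (α ^ q * φ ^ r * μ ^ 0 *
        (piTen φ / (α * μ) * stacyLikelihood n x φ μ α)) = ⊤ := by
  have hn0 : 0 < n := by omega
  have hn' : (0 : ℝ) < n := by exact_mod_cast hn0
  have hP : 0 < ∏ i, x i := Finset.prod_pos fun i _ => hx i
  obtain ⟨C, ε, hC, hε, hε1, hmr, -⟩ := exists_meanRatio_upper (x := x) hn0
  obtain ⟨c₀, _, hc₀, -, -, hg⟩ := exists_gammaRatio_bounds hn0
  set c := (1 / 8) * c₀ * (∏ i, x i)⁻¹ * Real.exp (-(2 * C * n)) / 2 with hc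
  have hc0 : 0 < c := by positivity
  have key : ∀ α φ : ℝ, 0 < α → α ≤ ε → 1 / α ^ 2 ≤ φ → φ ≤ 2 / α ^ 2 →
      c * α ≤ α ^ q * φ ^ r * marginal n x φ α := by
    intro α φ hα0 hα h1 h2
    have hα1 : α ≤ 1 := hα.trans hε1
    have hφ0 : 0 < φ := lt_of_lt_of_le (by positivity) h1
    have ha : 1 ≤ α ^ 2 * φ := by
      rw [div_le_iff₀ (by positivity)] at h1
      linarith
    have hb : α ^ 2 * φ ≤ 2 := by
      rw [le_div_iff₀ (by positivity)] at h2
      linarith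
    have hα2 : α ^ 2 ≤ 1 := pow_le_one₀ hα0.le hα1
    have hφ1 : 1 ≤ φ := by nlinarith
    -- all powers of `φ` are powers of its square root `t`, and `1 ≤ α * t ≤ 2`
    set t := Real.sqrt φ with ht
    have ht0 : 0 < t := Real.sqrt_pos.2 hφ0
    have htφ : t ^ 2 = φ := Real.sq_sqrt hφ0.le
    have hat : 1 ≤ α * t := by
      by_contra! hcon
      have : (α * t) ^ 2 < 1 := pow_lt_one₀ (by positivity) hcon two_ne_zero
      rw [mul_pow, htφ] at this
      linarith
    have hat2 : α * t ≤ 2 := by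
      by_contra! hcon
      have : (2 : ℝ) ^ 2 < (α * t) ^ 2 := by gcongr
      rw [mul_pow, htφ] at this
      linarith
    have hpow : ∀ s : ℝ, φ ^ (s / 2) = t ^ s := by
      intro s
      rw [ht, Real.sqrt_eq_rpow, ← Real.rpow_mul hφ0.le]
      congr 1
      ring
    have hpi0 := piTen_nonneg φ
    have hpi : (1 / 8) * (t ^ 3)⁻¹ ≤ piTen φ := by
      refine le_trans (le_of_eq ?_) (le_piTen_large hφ1)
      rw [hpow, Real.rpow_neg ht0.le]
      norm_cast
    have hgr : c₀ * t ^ (n - 1) ≤ gammaRatio n φ := by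
      refine le_trans (le_of_eq ?_) (hg φ hφ1).1
      rw [hpow, ← Real.rpow_natCast, Nat.cast_sub (by omega), Nat.cast_one]
    have hm : Real.exp (-(2 * C * n)) ≤ meanRatio n x α ^ (-((n : ℝ) * φ)) := by
      refine le_trans ?_ (Real.rpow_le_rpow_of_nonpos (meanRatio_pos hn0 α) (hmr α hα0 hα)
        (by nlinarith))
      rw [← Real.exp_mul]
      gcongr
      have : C * n * (α ^ 2 * φ) ≤ C * n * 2 := by gcongr
      linarith
    have hpos := gammaRatio_pos hn0 hφ0
    obtain ⟨k, rfl⟩ := Nat.exists_eq_add_of_le hn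
    obtain ⟨m, rfl⟩ : ∃ m, r = m + 1 := ⟨r - 1, by omega⟩
    have hq : α ^ (2 * m + 1) ≤ α ^ q := pow_le_pow_of_le_one hα0.le hα1 (by omega)
    have e1 : 2 + k - 2 = k := by omega
    have e2 : 2 + k - 1 = k + 1 := by omega
    rw [e2] at hgr
    have hone : 1 ≤ (α * t) ^ (2 * m + 1 + k) := one_le_pow₀ hat
    have hαt : α / 2 ≤ 1 / t := by
      rw [div_le_div_iff₀ two_pos ht0]
      linarith
    set D := (∏ i, x i)⁻¹ * Real.exp (-(2 * C * (2 + k : ℕ))) with hD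
    have hD0 : 0 < D := by positivity
    calc c * α = (1 / 8) * c₀ * D * 1 * (α / 2) := by rw [hc, hD]; ring
      _ ≤ (1 / 8) * c₀ * D * (α * t) ^ (2 * m + 1 + k) * (1 / t) := by gcongr
      _ = α ^ (2 * m + 1) * (t ^ 2) ^ (m + 1) * ((1 / 8) * (t ^ 3)⁻¹ * α ^ k * (∏ i, x i)⁻¹ *
          (c₀ * t ^ (k + 1)) * Real.exp (-(2 * C * (2 + k : ℕ)))) := by
          rw [hD]
          field_simp
          ring
      _ ≤ _ := by
          rw [marginal, e1, htφ]
          gcongr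
  rw [← top_le_iff, ← lintegral_inv_zero hε hc0]
  refine (setLIntegral_mono' measurableSet_Ioc fun α hα => ?_).trans
    (lintegral_mono_set fun α hα => hα.1)
  obtain ⟨hα0, hα1⟩ := hα
  rw [lintegral_shape_moment hn hx q r hα0]
  refine le_lintegral_Ioi (a := 1 / α ^ 2) (b := 2 / α ^ 2) (v := c * α) (by positivity)
    (by positivity) (le_of_eq ?_) fun φ h1 h2 => ENNReal.ofReal_le_ofReal (key α φ hα0 hα1 h1 h2)
  field_simp
  ring

end Data

/-- (Corollary 3.5 of the paper.) `π₁₀(φ) ∝ φ^{-1/2}` as `φ → 0⁺`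
and `π₁₀(φ) ∝ φ^{-3/2}` as `φ → ∞`; moreover, for the `(φ,α,μ)`-reference prior
`π₁₀(φ)/(αμ)` in the Stacy model, the posterior is proper for every `n ≥ 2` and
positive data not all equal, while all higher posterior moments are improper. -/
theorem reference_prior_power_law_and_proper
    (n : ℕ) (hn : 2 ≤ n) (x : Fin n → ℝ) (hx : ∀ i, 0 < x i) (hxne : ∃ i j, x i ≠ x j) :
    (Filter.limsup (fun φ : ℝ => ENNReal.ofReal (piTen φ / φ ^ (-(1:ℝ)/2)))
        (𝓝[>] (0:ℝ)) < ⊤ ∧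
      Filter.limsup (fun φ : ℝ => ENNReal.ofReal (φ ^ (-(1:ℝ)/2) / piTen φ))
        (𝓝[>] (0:ℝ)) < ⊤) ∧
    (Filter.limsup (fun φ : ℝ => ENNReal.ofReal (piTen φ / φ ^ (-(3:ℝ)/2)))
        Filter.atTop < ⊤ ∧
      Filter.limsup (fun φ : ℝ => ENNReal.ofReal (φ ^ (-(3:ℝ)/2) / piTen φ))
        Filter.atTop < ⊤) ∧
    (∫⁻ α in Set.Ioi (0:ℝ), ∫⁻ μ in Set.Ioi (0:ℝ), ∫⁻ φ in Set.Ioi (0:ℝ),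
      ENNReal.ofReal (piTen φ / (α * μ) * stacyLikelihood n x φ μ α)) < ⊤ ∧
    (∀ q r j : ℕ, ¬(q = 0 ∧ r = 0 ∧ j = 0) →
      (∫⁻ α in Set.Ioi (0:ℝ), ∫⁻ μ in Set.Ioi (0:ℝ), ∫⁻ φ in Set.Ioi (0:ℝ),
        ENNReal.ofReal (α ^ q * φ ^ r * μ ^ j *
          (piTen φ / (α * μ) * stacyLikelihood n x φ μ α))) = ⊤) := by
  refine ⟨limsup_small, limsup_large, lintegral_posterior_lt_top hn hx hxne, fun q r j h => ?_⟩
  rcases Nat.eq_zero_or_pos j with rfl | hj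
  · rcases Nat.lt_or_ge r q with hqr | hqr
    · exact moment_eq_top_of_lt hn hx hqr
    · exact moment_eq_top_of_lt_two_mul hn hx (by omega)
  · exact moment_eq_top_of_scale hn hx q r hj
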